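/- arXiv:1104.1994 — 3 statements merged into one kernel-verified Lean document; each statement's English description precedes it below -/
import Mathlib

section
/- Let F̂, Ĝ : ℂ × ℂ → ℂ, and set F(n,k) = cos(πn)·F̂(n,k) and G(n,k) = cos(πn)·Ĝ(n,k). Assume F and G satisfy the WZ-pair relation F(n+1,k) − F(n,k) = G(n,k+1) − G(n,k) for all complex n, k, and that for every complex x: (i) the series ∑_{n=0}^∞ (−1)^n Ĝ(x+n, 0) and ∑_{n=0}^∞ F̂(x, n) converge; and (ii) G(x+n, 0) → 0 and G(x, n) → 0 as the integer n → ∞. Define t(x) = ∑_{n=0}^∞ (−1)^n Ĝ(x+n, 0) − ∑_{n=0}^∞ F̂(x, n). Then t(x+1) = −t(x) for every complex number x with cos(πx) ≠ 0. -/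
/-!
Since `cos (π (x + 1)) = -cos (π x)`, dividing the WZ relation at `(x, k)` by `cos (π x)` turns the
difference on its left into a sum: `F̂ (x + 1, k) + F̂ (x, k) = Ĝ (x, k) - Ĝ (x, k + 1)`. The right
side telescopes over `k`, so the series of `F̂` at `x` and at `x + 1` add up to `Ĝ (x, 0)`. The
alternating series of `Ĝ` at `x` and at `x + 1` also add up to `Ĝ (x, 0)`, because the second is the
tail of the first with opposite signs. Subtracting, `t x + t (x + 1) = 0`.

Both identities are statements about limits of partial sums, and in each of them convergence of the
series at `x` forces convergence of the series at `x + 1`.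
-/

open Filter Topology Finset SummationFilter

section ConditionalSums

variable {M : Type*} [TopologicalSpace M]

theorem hasSum_conditional_nat_iff_tendsto [AddCommMonoid M] {f : ℕ → M} {a : M} :
    HasSum f a (conditional ℕ) ↔ Tendsto (fun n ↦ ∑ i ∈ range n, f i) atTop (𝓝 a) := by
  rw [HasSum, conditional_filter_eq_map_range, tendsto_map'_iff, Function.comp_def]

variable [AddCommGroup M] [IsTopologicalAddGroup M]

theorem hasSum_conditional_sub_succ {f : ℕ → M} {l : M} (hf : Tendsto f atTop (𝓝 l)) :
    HasSum (fun n ↦ f n - f (n + 1)) (f 0 - l) (conditional ℕ) := by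
  simpa only [hasSum_conditional_nat_iff_tendsto, sum_range_sub'] using hf.const_sub (f 0)

theorem hasSum_conditional_succ {f : ℕ → M} {a : M} (hf : HasSum f a (conditional ℕ)) :
    HasSum (fun n ↦ f (n + 1)) (a - f 0) (conditional ℕ) := by
  rw [hasSum_conditional_nat_iff_tendsto] at hf ⊢
  simpa only [Function.comp_def, sum_range_succ', add_sub_cancel_right] using
    (hf.comp (tendsto_add_atTop_nat 1)).sub_const (f 0)

theorem hasSum_conditional_alternating_succ {K : Type*} [Ring K] [Module K M] {f : ℕ → M} {a : M}
    (hf : HasSum (fun n ↦ (-1 : K) ^ n • f n) a (conditional ℕ)) :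
    HasSum (fun n ↦ (-1 : K) ^ n • f (n + 1)) (f 0 - a) (conditional ℕ) := by
  simpa only [pow_succ, mul_neg_one, neg_smul, neg_neg, pow_zero, one_smul, neg_sub] using
    (hasSum_conditional_succ hf).neg

theorem hasSum_conditional_alternating_add_one {K R : Type*} [Ring K] [Module K M]
    [AddMonoidWithOne R] {f : R → M} {x : R} {a : M}
    (hf : HasSum (fun n : ℕ ↦ (-1 : K) ^ n • f (x + n)) a (conditional ℕ)) :
    HasSum (fun n : ℕ ↦ (-1 : K) ^ n • f (x + 1 + n)) (f x - a) (conditional ℕ) := by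
  have shift (n : ℕ) : x + ((n + 1 : ℕ) : R) = x + 1 + n := by
    rw [add_comm n 1, Nat.cast_add, Nat.cast_one, add_assoc]
  simpa only [shift, Nat.cast_zero, add_zero] using
    hasSum_conditional_alternating_succ (f := fun n : ℕ ↦ f (x + n)) hf

end ConditionalSums

/-- The Wilf–Zeilberger relation between two functions of two variables: the forward difference of
`F` in the first variable is the forward difference of `G` in the second. -/
def IsWZPair {R E : Type*} [Add R] [One R] [Sub E] (F G : R × R → E) : Prop :=
  ∀ n k : R, F (n + 1, k) - F (n, k) = G (n, k + 1) - G (n, k)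

section AntiperiodicTwist

variable {R K E : Type*} [AddMonoidWithOne R] [DivisionRing K] [AddCommGroup E] [Module K E]
  {c : R → K} {Fh Gh : R × R → E} {x : R}

theorem IsWZPair.add_eq_sub_of_antiperiodic
    (hWZ : IsWZPair (fun p ↦ c p.1 • Fh p) (fun p ↦ c p.1 • Gh p))
    (hc : Function.Antiperiodic c 1) (hx : c x ≠ 0) (k : R) :
    Fh (x + 1, k) + Fh (x, k) = Gh (x, k) - Gh (x, k + 1) := by
  have twisted : -(c x • Fh (x + 1, k)) - c x • Fh (x, k) =
      c x • Gh (x, k + 1) - c x • Gh (x, k) := by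
    simpa only [hc x, neg_smul] using hWZ x k
  apply smul_right_injective E hx
  simp only [smul_add, smul_sub]
  rw [← neg_sub (c x • Gh (x, k + 1)), ← twisted]
  abel

variable [TopologicalSpace E] [IsTopologicalAddGroup E]

theorem IsWZPair.hasSum_conditional_add_one_of_antiperiodic {a : E}
    (hWZ : IsWZPair (fun p ↦ c p.1 • Fh p) (fun p ↦ c p.1 • Gh p))
    (hc : Function.Antiperiodic c 1) (hx : c x ≠ 0)
    (hF : HasSum (fun n : ℕ ↦ Fh (x, n)) a (conditional ℕ))
    (hG : Tendsto (fun n : ℕ ↦ Gh (x, n)) atTop (𝓝 0)) :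
    HasSum (fun n : ℕ ↦ Fh (x + 1, n)) (Gh (x, 0) - a) (conditional ℕ) := by
  have telescoped := hasSum_conditional_sub_succ hG
  simp only [Nat.cast_add_one, ← hWZ.add_eq_sub_of_antiperiodic hc hx] at telescoped
  simpa only [add_sub_cancel_right, Nat.cast_zero, sub_zero] using telescoped.sub hF

theorem wz_pair_antiperiodic_general [ContinuousConstSMul K E] [T2Space E] {F G : R × R → E}
    (hF : ∀ p, F p = c p.1 • Fh p) (hG : ∀ p, G p = c p.1 • Gh p) (hWZ : IsWZPair F G)
    (hc : Function.Antiperiodic c 1) (hx : c x ≠ 0)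
    (hGsum : Summable (fun n : ℕ ↦ (-1 : K) ^ n • Gh (x + n, 0)) (conditional ℕ))
    (hFsum : Summable (fun n : ℕ ↦ Fh (x, n)) (conditional ℕ))
    (hGlim : Tendsto (fun n : ℕ ↦ G (x, n)) atTop (𝓝 0)) (t : R → E)
    (ht : ∀ y, t y = (∑'[conditional ℕ] n : ℕ, (-1 : K) ^ n • Gh (y + n, 0)) -
      ∑'[conditional ℕ] n : ℕ, Fh (y, n)) :
    t (x + 1) = -t x := by
  obtain ⟨rfl, rfl⟩ : F = _ ∧ G = _ := ⟨funext hF, funext hG⟩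
  have hGh : Tendsto (fun n : ℕ ↦ Gh (x, n)) atTop (𝓝 0) := by
    rwa [← tendsto_const_smul_iff₀ hx, smul_zero]
  have hF' := hWZ.hasSum_conditional_add_one_of_antiperiodic hc hx hFsum.hasSum hGh
  have hG' := hasSum_conditional_alternating_add_one (f := fun y ↦ Gh (y, 0)) hGsum.hasSum
  rw [ht, ht, hF'.tsum_eq, hG'.tsum_eq]
  abel

end AntiperiodicTwist

theorem antiperiodic_cos_pi_mul : Function.Antiperiodic (fun z : ℂ ↦ Complex.cos (Real.pi * z)) 1 :=
  fun z ↦ by simpa only [mul_add, mul_one] using Complex.cos_antiperiodic (Real.pi * z)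

/-- If `F (n,k) = cos (π n) * F̂ (n,k)` and `G (n,k) = cos (π n) * Ĝ (n,k)`
form a WZ-pair with the appropriate convergence and vanishing hypotheses, then
`t x = ∑' n, (-1)^n Ĝ (x+n, 0) - ∑' n, F̂ (x, n)` satisfies `t (x+1) = -t x`
for every `x` with `cos (π x) ≠ 0`. -/
theorem wz_pair_antiperiodic (Fh Gh F G : ℂ × ℂ → ℂ)
    (hF : ∀ p : ℂ × ℂ, F p = Complex.cos ((Real.pi : ℂ) * p.1) * Fh p)
    (hG : ∀ p : ℂ × ℂ, G p = Complex.cos ((Real.pi : ℂ) * p.1) * Gh p)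
    (hWZ : ∀ n k : ℂ, F (n + 1, k) - F (n, k) = G (n, k + 1) - G (n, k))
    (hGsum : ∀ x : ℂ, Summable (fun n : ℕ => (-1 : ℂ) ^ n * Gh (x + n, 0)))
    (hFsum : ∀ x : ℂ, Summable (fun n : ℕ => Fh (x, n)))
    (hGlim : ∀ x : ℂ, Filter.Tendsto (fun n : ℕ => G (x + n, 0)) Filter.atTop (nhds 0))
    (hGlim' : ∀ x : ℂ, Filter.Tendsto (fun n : ℕ => G (x, n)) Filter.atTop (nhds 0))
    (t : ℂ → ℂ)
    (ht : ∀ x : ℂ, t x = (∑' n : ℕ, (-1 : ℂ) ^ n * Gh (x + n, 0)) - ∑' n : ℕ, Fh (x, n)) :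
    ∀ x : ℂ, Complex.cos ((Real.pi : ℂ) * x) ≠ 0 → t (x + 1) = -t x := by
  intro x hx
  refine wz_pair_antiperiodic_general hF hG hWZ antiperiodic_cos_pi_mul hx
    ((hGsum x).mono_filter (conditional ℕ).le_atTop)
    ((hFsum x).mono_filter (conditional ℕ).le_atTop) (hGlim' x) t fun y ↦ ?_
  simpa only [smul_eq_mul, tsum_eq_of_summable_unconditional (L := conditional ℕ), hGsum, hFsum]
    using ht y
end

section
/- As the real variable x tends to 1/2, the Abel sum S(x) = lim_{z→1⁻} ∑_{n=0}^∞ (−1)^n z^n · (1/2+2x)_n (1/2+x)_n² / [ (3/2−x)_n (1/2)_n² ] · (2n+1+x)/(2n+1)² satisfies S(x) = 1/2 − (2x−1) + O((2x−1)²); that is, there exist δ > 0 and C > 0 such that for all real x with |x − 1/2| < δ, the Abel limit S(x) exists and |S(x) − 1/2 + (2x−1)| ≤ C·(2x−1)². -/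
/-- The Pochhammer symbol (rising factorial) `(a)_n = a (a+1) ⋯ (a+n-1)` for real `a`. -/
def pochR (a : ℝ) (n : ℕ) : ℝ := ∏ j ∈ Finset.range n, (a + j)

/-!
The summand is `(-1) ^ n * (w n * (2 * n + 1 + x))` with a positive weight `w` that decreases to `0`
near `x = 1/2`. With `b n = w n * (n + 3/2 - 2 * x)`, a Gosper-type identity gives
`w n * (2 * n + 1 + x) = b n + b (n + 1) - (2 * x - 1) ^ 2 * (w n * d n)` with `d n = O(1 / n ^ 2)`.
Since `b (n + 1) - b n → 0`, the alternating sum of `b n + b (n + 1)` telescopes in the Abel sense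
to `b 0 = 3/2 - 2 * x = 1/2 - (2 * x - 1)`, while the alternating sum of `w n * d n` converges
absolutely, with a bound independent of `x`.
-/

open Filter Topology Finset

section AbelSummation

variable {a b : ℕ → ℝ} {S T : ℝ}

/-- `HasAbelSum a S` says that `∑ a n` has Abel sum `S`. Convergence of `∑ a n * z ^ n` on `(0, 1)`
is part of the definition because `tsum` takes the value `0` on divergent series. -/
def HasAbelSum (a : ℕ → ℝ) (S : ℝ) : Prop :=
  (∀ z ∈ Set.Ioo (0 : ℝ) 1, Summable fun n => a n * z ^ n) ∧
    Tendsto (fun z : ℝ => ∑' n, a n * z ^ n) (𝓝[<] 1) (𝓝 S)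

theorem hasAbelSum_of_tendsto_sum_range
    (h : Tendsto (fun N => ∑ n ∈ range N, a n) atTop (𝓝 S)) : HasAbelSum a S := by
  refine ⟨fun z hz => summable_powerSeries_of_norm_lt_one h.cauchySeq ?_,
    Real.tendsto_tsum_powerSeries_nhdsWithin_lt h⟩
  rw [Real.norm_of_nonneg hz.1.le]
  exact hz.2

theorem HasAbelSum.sub (ha : HasAbelSum a S) (hb : HasAbelSum b T) :
    HasAbelSum (fun n => a n - b n) (S - T) := by
  simp only [HasAbelSum, sub_mul]
  refine ⟨fun z hz => (ha.1 z hz).sub (hb.1 z hz), (ha.2.sub hb.2).congr' ?_⟩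
  filter_upwards [Ioo_mem_nhdsLT zero_lt_one] with z hz
  exact ((ha.1 z hz).tsum_sub (hb.1 z hz)).symm

theorem summable_mul_pow_of_summable_add_succ {z : ℝ} (hz : z ∈ Set.Ioo (0 : ℝ) 1)
    (h : Summable fun n => (a n + a (n + 1)) * z ^ n) : Summable fun n => a n * z ^ n := by
  obtain ⟨hz₀, hz₁⟩ := hz
  set M := ∑' n, |(a n + a (n + 1)) * z ^ n|
  have hterm (n : ℕ) :
      |a (n + 1) * z ^ (n + 1)| ≤ z * (|(a n + a (n + 1)) * z ^ n| + |a n * z ^ n|) := by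
    have hsplit : a (n + 1) * z ^ (n + 1) =
        z * ((a n + a (n + 1)) * z ^ n - a n * z ^ n) := by ring
    rw [hsplit, abs_mul, abs_of_pos hz₀]
    gcongr
    exact abs_sub _ _
  -- The partial sums `P N` of `∑ |a n * z ^ n|` satisfy `P N ≤ P (N + 1) ≤ |a 0| + z * (M + P N)`.
  have hpartial (N : ℕ) : ∑ n ∈ range N, |a n * z ^ n| ≤ (|a 0| + z * M) / (1 - z) := by
    rw [le_div_iff₀ (sub_pos.2 hz₁)]
    have hM : ∑ n ∈ range N, |(a n + a (n + 1)) * z ^ n| ≤ M :=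
      h.abs.sum_le_tsum _ fun _ _ => abs_nonneg _
    have hrec : ∑ n ∈ range (N + 1), |a n * z ^ n| ≤
        |a 0| + z * (M + ∑ n ∈ range N, |a n * z ^ n|) := by
      rw [sum_range_succ', pow_zero, mul_one, add_comm]
      gcongr
      refine (sum_le_sum fun n _ => hterm n).trans ?_
      rw [← mul_sum, sum_add_distrib]
      gcongr
    have hmono : ∑ n ∈ range N, |a n * z ^ n| ≤ ∑ n ∈ range (N + 1), |a n * z ^ n| := by
      rw [sum_range_succ]
      exact le_add_of_nonneg_right (abs_nonneg _)
    linarith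
  exact (summable_of_sum_range_le (fun _ => abs_nonneg _) hpartial).of_abs

theorem tsum_mul_pow_eq_tsum_add_succ {z : ℝ} (hz : 1 + z ≠ 0)
    (h : Summable fun n => a n * z ^ n) :
    ∑' n, a n * z ^ n = (z * ∑' n, (a n + a (n + 1)) * z ^ n + a 0) / (1 + z) := by
  have hshift : Summable fun n => a (n + 1) * z ^ (n + 1) := (summable_nat_add_iff 1).2 h
  have hsum : z * ∑' n, (a n + a (n + 1)) * z ^ n =
      z * ∑' n, a n * z ^ n + ∑' n, a (n + 1) * z ^ (n + 1) := by
    rw [← tsum_mul_left, ← tsum_mul_left, ← (h.mul_left z).tsum_add hshift]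
    exact tsum_congr fun n => by ring
  have hhead : ∑' n, a n * z ^ n = a 0 + ∑' n, a (n + 1) * z ^ (n + 1) := by
    simpa only [pow_zero, mul_one] using h.tsum_eq_zero_add
  rw [eq_div_iff hz, hsum]
  linear_combination hhead

theorem HasAbelSum.of_add_succ (h : HasAbelSum (fun n => a n + a (n + 1)) S) :
    HasAbelSum a ((S + a 0) / 2) := by
  have hsum (z : ℝ) (hz : z ∈ Set.Ioo (0 : ℝ) 1) : Summable fun n => a n * z ^ n :=
    summable_mul_pow_of_summable_add_succ hz (h.1 z hz)
  have hid : Tendsto (fun z : ℝ => z) (𝓝[<] 1) (𝓝 1) := nhdsWithin_le_nhds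
  have hlim := ((hid.mul h.2).add_const (a 0)).div (hid.const_add 1) (by norm_num)
  rw [one_mul, one_add_one_eq_two] at hlim
  refine ⟨hsum, hlim.congr' ?_⟩
  filter_upwards [Ioo_mem_nhdsLT zero_lt_one] with z hz
  exact (tsum_mul_pow_eq_tsum_add_succ (by linarith [hz.1]) (hsum z hz)).symm

theorem sum_range_alternating_add_succ (b : ℕ → ℝ) (N : ℕ) :
    ∑ n ∈ range N, (-1) ^ n * (b n + b (n + 1)) = b 0 - (-1) ^ N * b N := by
  induction N with
  | zero => simp
  | succ N ih =>
    rw [sum_range_succ, ih]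
    ring

theorem tendsto_sum_range_alternating_add_succ (hb : Tendsto b atTop (𝓝 0)) :
    Tendsto (fun N => ∑ n ∈ range N, (-1) ^ n * (b n + b (n + 1))) atTop (𝓝 (b 0)) := by
  have hsign : Tendsto (fun N => (-1) ^ N * b N) atTop (𝓝 0) :=
    squeeze_zero_norm (fun N => by simp) ((tendsto_zero_iff_abs_tendsto_zero _).1 hb)
  simpa only [sum_range_alternating_add_succ, sub_zero] using hsign.const_sub (b 0)

theorem hasAbelSum_alternating_add_succ
    (hb : Tendsto (fun n => b (n + 1) - b n) atTop (𝓝 0)) :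
    HasAbelSum (fun n => (-1) ^ n * (b n + b (n + 1))) (b 0) := by
  have hdiff : HasAbelSum (fun n => (-1) ^ n * (b n + b (n + 1)) +
      (-1) ^ (n + 1) * (b (n + 1) + b (n + 1 + 1))) (-(b 1 - b 0)) := by
    refine hasAbelSum_of_tendsto_sum_range
      ((tendsto_sum_range_alternating_add_succ hb).neg.congr fun N => ?_)
    rw [← sum_neg_distrib]
    exact sum_congr rfl fun n _ => by ring
  convert hdiff.of_add_succ using 1
  simp only [zero_add, pow_zero]
  ring

end AbelSummation

theorem tendsto_zero_of_mul_one_add_le {p u : ℕ → ℝ} (hp : ∀ n, 0 ≤ p n) (hu : ∀ n, 0 ≤ u n)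
    (hdiv : ¬ Summable u) (h : ∀ n, p (n + 1) * (1 + u n) ≤ p n) : Tendsto p atTop (𝓝 0) := by
  have hanti : Antitone p := antitone_nat_of_succ_le fun n =>
    (le_mul_of_one_le_right (hp _) (le_add_of_nonneg_right (hu n))).trans (h n)
  obtain ⟨l, hl⟩ : ∃ l, Tendsto p atTop (𝓝 l) :=
    ⟨_, tendsto_atTop_ciInf hanti ⟨0, Set.forall_mem_range.2 hp⟩⟩
  suffices l = 0 from this ▸ hl
  by_contra hne
  have hl_pos : 0 < l := (ge_of_tendsto' hl hp).lt_of_ne' hne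
  have hstep (n : ℕ) : l * u n ≤ p n - p (n + 1) := by
    have : l * u n ≤ p (n + 1) * u n :=
      mul_le_mul_of_nonneg_right (hanti.le_of_tendsto hl _) (hu n)
    linarith [h n]
  have hsum : Summable fun n => l * u n := by
    refine summable_of_sum_range_le (c := p 0) (fun n => mul_nonneg hl_pos.le (hu n)) fun N => ?_
    refine (sum_le_sum fun n _ => hstep n).trans ?_
    rw [sum_range_sub']
    exact sub_le_self _ (hp N)
  exact hdiv ((summable_mul_left_iff hl_pos.ne').1 hsum)

theorem pochR_zero (a : ℝ) : pochR a 0 = 1 := prod_range_zero _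

theorem pochR_succ (a : ℝ) (n : ℕ) : pochR a (n + 1) = pochR a n * (a + n) :=
  prod_range_succ _ n

theorem pochR_pos {a : ℝ} (ha : 0 < a) (n : ℕ) : 0 < pochR a n :=
  prod_pos fun _ _ => by positivity

/-- The summand without its sign and without the linear factor `2 * n + 1 + x`. -/
noncomputable def weight (x : ℝ) (n : ℕ) : ℝ :=
  pochR (1 / 2 + 2 * x) n * pochR (1 / 2 + x) n ^ 2 / (pochR (3 / 2 - x) n * pochR (1 / 2) n ^ 2) /
    (2 * (n : ℝ) + 1) ^ 2

/-- The error, divided by `(2 * x - 1) ^ 2 * weight x n`, in the approximation of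
`weight x n * (2 * n + 1 + x)` by `b n + b (n + 1)`, where
`b n = weight x n * (n + 3 / 2 - 2 * x)`. -/
noncomputable def defect (x : ℝ) (n : ℕ) : ℝ :=
  (1 - x) * (2 * n + 2 + x) / ((n + 3 / 2 - x) * (n + 3 / 2) ^ 2)

section Weight

variable {x : ℝ}

theorem weight_zero (x : ℝ) : weight x 0 = 1 := by simp [weight, pochR_zero]

theorem weight_pos (hx₀ : -1 / 4 < x) (hx₁ : x < 3 / 2) (n : ℕ) : 0 < weight x n := by
  have hnum₁ := pochR_pos (a := 1 / 2 + 2 * x) (by linarith) n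
  have hnum₂ := pochR_pos (a := 1 / 2 + x) (by linarith) n
  have hden₁ := pochR_pos (a := 3 / 2 - x) (by linarith) n
  have hden₂ := pochR_pos (a := 1 / 2) (by norm_num) n
  unfold weight
  positivity

theorem weight_ratio_den_pos (hx : x < 3 / 2) (n : ℕ) :
    0 < (n + 3 / 2 - x) * (n + 3 / 2 : ℝ) ^ 2 :=
  mul_pos (by linarith) (by positivity)

theorem weight_succ_mul (hx : x < 3 / 2) (n : ℕ) :
    weight x (n + 1) * ((n + 3 / 2 - x) * (n + 3 / 2) ^ 2) =
      weight x n * ((n + 1 / 2 + 2 * x) * (n + 1 / 2 + x) ^ 2) := by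
  have hpoch := (pochR_pos (a := 1 / 2) (by norm_num) n).ne'
  have hfac : (3 / 2 - x + n : ℝ) ≠ 0 := by linarith
  have hodd : (2 * n + 1 : ℝ) = 2 * (1 / 2 + n) := by ring
  have hodd_succ : (2 * (n + 1 : ℕ) + 1 : ℝ) = 2 * (n + 3 / 2) := by
    push_cast
    ring
  simp only [weight, pochR_succ]
  rw [hodd, hodd_succ, show (n + 3 / 2 - x : ℝ) = 3 / 2 - x + n by ring]
  generalize (3 / 2 - x + n : ℝ) = c at hfac ⊢
  field_simp
  ring

theorem weight_succ_mul_sub (hx : x < 3 / 2) (n : ℕ) :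
    weight x (n + 1) * (n + 5 / 2 - 2 * x) =
      weight x n * (n - 1 / 2 + 3 * x + (2 * x - 1) ^ 2 * defect x n) := by
  have hden : (n + 3 / 2 - x) * (n + 3 / 2 : ℝ) ^ 2 ≠ 0 := (weight_ratio_den_pos hx n).ne'
  have hdefect : defect x n * ((n + 3 / 2 - x) * (n + 3 / 2) ^ 2) = (1 - x) * (2 * n + 2 + x) :=
    div_mul_cancel₀ _ hden
  refine mul_right_cancel₀ hden ?_
  linear_combination (n + 5 / 2 - 2 * x) * weight_succ_mul hx n -
    weight x n * (2 * x - 1) ^ 2 * hdefect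

-- `weight x n` is of order `n ^ (5 * x - 3)`, so it decays only for `x < 3 / 5`; the bound
-- `x ≤ 11 / 20` keeps a uniform distance from that threshold.
theorem weight_ratio_num_add_le {s : ℝ} (hs : 0 ≤ s) (hx₀ : -1 / 4 < x) (hx₁ : x ≤ 11 / 20) :
    (s + 1 / 2 + 2 * x) * (s + 1 / 2 + x) ^ 2 + 4 / 25 * ((s + 3 / 2) * (s + 1 / 2 + x)) ≤
      (s + 3 / 2 - x) * (s + 3 / 2) ^ 2 := by
  have hfac : 0 < s + 1 / 2 + x := by linarith
  set P := (s + 3 / 2) * (s + 1 / 2 + x) with hP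
  have hgap : (s + 3 / 2 - x) * (s + 3 / 2) ^ 2 - (s + 1 / 2 + 2 * x) * (s + 1 / 2 + x) ^ 2 =
      (3 - 5 * x) * P - (1 - x) ^ 2 * (2 * x - 1) := by
    rw [hP]
    ring
  have hmain : 1 / 4 * P ≤ (3 - 5 * x) * P := by
    gcongr
    linarith
  have hcubic : (1 - x) ^ 2 * (2 * x - 1) ≤ 9 / 100 * P := by
    rcases le_total x (1 / 2) with hx | hx
    · have hneg : (1 - x) ^ 2 * (2 * x - 1) ≤ 0 :=
        mul_nonpos_of_nonneg_of_nonpos (sq_nonneg _) (by linarith)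
      exact hneg.trans (by positivity)
    · calc (1 - x) ^ 2 * (2 * x - 1) ≤ (1 / 2) ^ 2 * (1 / 10) := by
            gcongr <;> linarith
        _ ≤ 9 / 100 * (3 / 2 * 1) := by norm_num
        _ ≤ 9 / 100 * P := by
            rw [hP]
            gcongr <;> linarith
  linarith

theorem weight_ratio_num_mul_one_add_le {s : ℝ} (hs : 0 ≤ s) (hx₀ : -1 / 4 < x)
    (hx₁ : x ≤ 11 / 20) :
    (s + 1 / 2 + 2 * x) * (s + 1 / 2 + x) ^ 2 * (1 + 1 / 10 * (1 / (s + 1))) ≤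
      (s + 3 / 2 - x) * (s + 3 / 2) ^ 2 := by
  have hlin : s + 1 / 2 + 2 * x ≤ 8 / 5 * (s + 1) := by linarith
  have hsq : (s + 1 / 2 + x) ^ 2 ≤ (s + 3 / 2) * (s + 1 / 2 + x) := by
    rw [sq]
    exact mul_le_mul_of_nonneg_right (by linarith) (by linarith)
  have hextra : (s + 1 / 2 + 2 * x) * (s + 1 / 2 + x) ^ 2 * (1 / 10 * (1 / (s + 1))) ≤
      4 / 25 * ((s + 3 / 2) * (s + 1 / 2 + x)) := by
    calc (s + 1 / 2 + 2 * x) * (s + 1 / 2 + x) ^ 2 * (1 / 10 * (1 / (s + 1)))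
        ≤ 8 / 5 * (s + 1) * ((s + 3 / 2) * (s + 1 / 2 + x)) * (1 / 10 * (1 / (s + 1))) := by
          gcongr
      _ = 4 / 25 * ((s + 3 / 2) * (s + 1 / 2 + x)) := by
          field_simp
          ring
  linarith [weight_ratio_num_add_le hs hx₀ hx₁]

theorem weight_succ_mul_one_add_le (hx₀ : -1 / 4 < x) (hx₁ : x ≤ 11 / 20) (n : ℕ) :
    weight x (n + 1) * (1 + 1 / 10 * (1 / (n + 1))) ≤ weight x n := by
  have hx : x < 3 / 2 := by linarith
  refine le_of_mul_le_mul_right ?_ (weight_ratio_den_pos hx n)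
  calc weight x (n + 1) * (1 + 1 / 10 * (1 / (n + 1))) * ((n + 3 / 2 - x) * (n + 3 / 2) ^ 2)
      = weight x n *
          ((n + 1 / 2 + 2 * x) * (n + 1 / 2 + x) ^ 2 * (1 + 1 / 10 * (1 / (n + 1)))) := by
        rw [mul_right_comm, weight_succ_mul hx, mul_assoc]
    _ ≤ weight x n * ((n + 3 / 2 - x) * (n + 3 / 2) ^ 2) :=
        mul_le_mul_of_nonneg_left (weight_ratio_num_mul_one_add_le n.cast_nonneg hx₀ hx₁)
          (weight_pos hx₀ hx n).le

theorem weight_le_one (hx₀ : -1 / 4 < x) (hx₁ : x ≤ 11 / 20) (n : ℕ) : weight x n ≤ 1 := by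
  induction n with
  | zero => exact (weight_zero x).le
  | succ n ih =>
    refine (le_mul_of_one_le_right (weight_pos hx₀ (by linarith) _).le ?_).trans
      ((weight_succ_mul_one_add_le hx₀ hx₁ n).trans ih)
    exact le_add_of_nonneg_right (by positivity)

theorem tendsto_weight (hx₀ : -1 / 4 < x) (hx₁ : x ≤ 11 / 20) :
    Tendsto (weight x) atTop (𝓝 0) := by
  refine tendsto_zero_of_mul_one_add_le (fun n => (weight_pos hx₀ (by linarith) n).le)
    (fun n => by positivity) ?_ (weight_succ_mul_one_add_le hx₀ hx₁)
  rw [summable_mul_left_iff (by norm_num)]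
  exact_mod_cast (summable_nat_add_iff 1).not.2 Real.not_summable_one_div_natCast

theorem summable_four_div_add_one_sq : Summable fun n : ℕ => 4 / ((n : ℝ) + 1) ^ 2 := by
  simpa [div_eq_mul_inv] using
    ((summable_nat_add_iff 1).2 (Real.summable_nat_pow_inv.2 one_lt_two)).mul_left (4 : ℝ)

theorem abs_defect_le (hx₀ : -1 / 4 < x) (hx₁ : x ≤ 11 / 20) (n : ℕ) :
    |defect x n| ≤ 4 / ((n : ℝ) + 1) ^ 2 := by
  have hfac : 0 < n + 3 / 2 - x := by linarith
  have hlin : 0 ≤ 2 * n + 2 + x := by linarith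
  have hnonneg : 0 ≤ defect x n :=
    div_nonneg (mul_nonneg (by linarith) hlin) (weight_ratio_den_pos (by linarith) n).le
  rw [abs_of_nonneg hnonneg]
  have hnum : (1 - x) * (2 * n + 2 + x) ≤ 4 * (n + 3 / 2 - x) := by
    calc (1 - x) * (2 * n + 2 + x) ≤ 5 / 4 * (2 * n + 2 + x) := by
          gcongr
          linarith
      _ ≤ 4 * (n + 3 / 2 - x) := by linarith
  calc defect x n ≤ 4 * (n + 3 / 2 - x) / ((n + 3 / 2 - x) * (n + 3 / 2) ^ 2) :=
        div_le_div_of_nonneg_right hnum (weight_ratio_den_pos (by linarith) n).le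
    _ = 4 / (n + 3 / 2 : ℝ) ^ 2 := by
        rw [mul_comm 4, mul_div_mul_left _ _ hfac.ne']
    _ ≤ 4 / ((n : ℝ) + 1) ^ 2 := by
        gcongr
        norm_num

theorem tendsto_defect (hx₀ : -1 / 4 < x) (hx₁ : x ≤ 11 / 20) : Tendsto (defect x) atTop (𝓝 0) :=
  squeeze_zero_norm (abs_defect_le hx₀ hx₁) summable_four_div_add_one_sq.tendsto_atTop_zero

theorem norm_alternating_weight_mul_defect_le (hx₀ : -1 / 4 < x) (hx₁ : x ≤ 11 / 20) (n : ℕ) :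
    ‖(-1) ^ n * (weight x n * defect x n)‖ ≤ 4 / ((n : ℝ) + 1) ^ 2 := by
  have hpos := weight_pos hx₀ (by linarith) n
  calc ‖(-1) ^ n * (weight x n * defect x n)‖ = weight x n * |defect x n| := by
        simp [abs_of_pos hpos]
    _ ≤ |defect x n| := mul_le_of_le_one_left (abs_nonneg _) (weight_le_one hx₀ hx₁ n)
    _ ≤ _ := abs_defect_le hx₀ hx₁ n

theorem hasAbelSum_weight_telescope (hx₀ : -1 / 4 < x) (hx₁ : x ≤ 11 / 20) :
    HasAbelSum (fun n : ℕ => (-1) ^ n *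
      (weight x n * (n + 3 / 2 - 2 * x) + weight x (n + 1) * (n + 5 / 2 - 2 * x)))
      (3 / 2 - 2 * x) := by
  let b (n : ℕ) : ℝ := weight x n * (n + 3 / 2 - 2 * x)
  have hdiff : Tendsto (fun n => b (n + 1) - b n) atTop (𝓝 0) := by
    have hlim := (tendsto_weight hx₀ hx₁).mul
      (((tendsto_defect hx₀ hx₁).const_mul ((2 * x - 1) ^ 2)).const_add (5 * x - 2))
    rw [zero_mul] at hlim
    refine hlim.congr fun n => ?_
    simp only [b]
    push_cast
    linear_combination -weight_succ_mul_sub (x := x) (by linarith) n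
  convert hasAbelSum_alternating_add_succ hdiff using 1
  · ext n
    simp only [b]
    push_cast
    ring
  · simp [b, weight_zero]

theorem hasAbelSum_weight (hx₀ : -1 / 4 < x) (hx₁ : x ≤ 11 / 20) :
    HasAbelSum (fun n : ℕ => (-1) ^ n * (weight x n * (2 * n + 1 + x)))
      (3 / 2 - 2 * x - (2 * x - 1) ^ 2 * ∑' n, (-1) ^ n * (weight x n * defect x n)) := by
  have hsum : Summable fun n => (-1) ^ n * (weight x n * defect x n) :=
    .of_norm_bounded summable_four_div_add_one_sq (norm_alternating_weight_mul_defect_le hx₀ hx₁)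
  have herror := hasAbelSum_of_tendsto_sum_range
    (hsum.hasSum.mul_left ((2 * x - 1) ^ 2)).tendsto_sum_nat
  convert (hasAbelSum_weight_telescope hx₀ hx₁).sub herror using 2 with n
  rw [weight_succ_mul_sub (by linarith)]
  ring

end Weight

/-- **Lemma 3.** As `x → 1/2`, the Abel sum
`S x = lim_{z→1⁻} ∑_{n≥0} (-1)^n z^n (1/2+2x)_n (1/2+x)_n² / ((3/2-x)_n (1/2)_n²) · (2n+1+x)/(2n+1)²`
satisfies `S x = 1/2 - (2x-1) + O((2x-1)²)`. -/
theorem lemma3_expansion :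
    ∃ δ > (0:ℝ), ∃ C > (0:ℝ), ∀ x : ℝ, |x - 1/2| < δ →
      ∃ S : ℝ,
        Filter.Tendsto
          (fun z : ℝ => ∑' n : ℕ,
            (-1 : ℝ) ^ n * z ^ n *
              (pochR (1/2 + 2*x) n * pochR (1/2 + x) n ^ 2 /
                (pochR (3/2 - x) n * pochR (1/2) n ^ 2)) *
              ((2 * (n : ℝ) + 1 + x) / (2 * (n : ℝ) + 1) ^ 2))
          (nhdsWithin 1 (Set.Iio 1)) (nhds S) ∧
        |S - 1/2 + (2 * x - 1)| ≤ C * (2 * x - 1) ^ 2 := by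
  set C := ∑' n : ℕ, 4 / ((n : ℝ) + 1) ^ 2
  have hC : 0 < C := summable_four_div_add_one_sq.tsum_pos (fun n => by positivity) 0 (by norm_num)
  refine ⟨1 / 20, by norm_num, C, hC, fun x hx => ?_⟩
  obtain ⟨hx₀, hx₁⟩ := abs_lt.1 hx
  replace hx₀ : -1 / 4 < x := by linarith
  replace hx₁ : x ≤ 11 / 20 := by linarith
  set R := ∑' n, (-1) ^ n * (weight x n * defect x n)
  have hR : |R| ≤ C := tsum_of_norm_bounded summable_four_div_add_one_sq.hasSum
    (norm_alternating_weight_mul_defect_le hx₀ hx₁)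
  refine ⟨_, (hasAbelSum_weight hx₀ hx₁).2.congr fun z => tsum_congr fun n => ?_, ?_⟩
  · simp only [weight]
    ring
  · calc |3 / 2 - 2 * x - (2 * x - 1) ^ 2 * R - 1 / 2 + (2 * x - 1)|
        = |-(R * (2 * x - 1) ^ 2)| := by
          congr 1
          ring
      _ = |R| * (2 * x - 1) ^ 2 := by rw [abs_neg, abs_mul, abs_sq]
      _ ≤ C * (2 * x - 1) ^ 2 := by gcongr
end

section
/- For every real x with −1/2 < x < 1/2: (√2/4)·∑_{n=0}^∞ (−1)^n · 2^{−3(n+x)} · [ (1/2)_{n+x} / (1)_{n+x} ]³ · (6(n+x)+1) = 1/(π cos πx) + 4√2 · 8^{−x} · (x²/(2x−1)) · [ (1/2)_x / (1)_x ]³ · ∑_{n=0}^∞ 2^{−n} · (x+1/2)_n² / [ (x+1)_n · (3/2−x)_n ], where both series converge. -/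
/-- The Pochhammer symbol for real index: `(a)_t = Γ(a+t)/Γ(a)`. -/
noncomputable def pochG (a t : ℝ) : ℝ := Real.Gamma (a + t) / Real.Gamma a

/-!
The two series come from a Wilf–Zeilberger pair `F(z + 1, k) - F(z, k) = G(z, k + 1) - G(z, k)`.
Summing it over `k` shows that `T(z) = ∑ₖ F(z, k) - ∑ₙ G(z + n, 0)` has period `1`, so that `T`,
which is holomorphic for `re z > 0`, extends to an entire function. On a period strip the terms of
both series decay geometrically, and `T` grows at most like `|z|² exp (π |im z|)`; a function of
period `1` that is `o(exp (2π |im z|))` is constant. At `z = 1/2` every `G(1/2 + n, 0)` vanishes and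
`∑ₖ F(1/2, k)` is an arctangent integral with value `1/π`. Dividing `T(z) = 1/π` by `cos (π z)`
yields the identity.
-/

section PeriodicLiouville

open Complex Filter Asymptotics Function.Periodic
open scoped Topology Real

variable {F : ℂ → ℂ} {h : ℝ}

theorem differentiable_cuspFunction_of_isLittleO (hh : 0 < h) (hF : Differentiable ℂ F)
    (hper : Function.Periodic F h)
    (hgrowth : F =o[comap im atTop] fun z => Real.exp (2 * π * z.im / h)) :
    Differentiable ℂ (cuspFunction h F) := by
  have hdiff : ∀ q ≠ 0, DifferentiableAt ℂ (cuspFunction h F) q := fun q hq =>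
    qParam_right_inv hh.ne' hq ▸ differentiableAt_cuspFunction hh.ne' hper (hF _)
  have hexp : ∀ q : ℂ, q ≠ 0 → Real.exp (2 * π * (invQParam h q).im / h) = ‖q⁻¹‖ := by
    intro q hq
    rw [norm_inv, ← Real.exp_log (norm_pos_iff.2 hq), ← Real.exp_neg, im_invQParam]
    field_simp
  have hinv : cuspFunction h F =o[𝓝[≠] 0] fun q : ℂ => q⁻¹ := by
    refine isLittleO_norm_right.1 <| (hgrowth.comp_tendsto (invQParam_tendsto hh)).congr' ?_ ?_ <;>
      filter_upwards [self_mem_nhdsWithin] with q hq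
    · exact (cuspFunction_eq_of_nonzero h F hq).symm
    · exact hexp q hq
  have hconst : (fun _ => cuspFunction h F 0) =o[𝓝[≠] 0] fun q : ℂ => q⁻¹ :=
    isLittleO_const_left.2 <| Or.inr tendsto_norm_inv_nhdsNE_zero_atTop
  have hupdate := differentiableOn_update_limUnder_of_isLittleO (f := cuspFunction h F) univ_mem
    (fun q hq => (hdiff q hq.2).differentiableWithinAt)
    (by simpa only [sub_zero] using hinv.sub hconst)
  rwa [← cuspFunction_zero_eq_limUnder_nhds_ne, Function.update_eq_self,
    differentiableOn_univ] at hupdate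

theorem exists_norm_le_of_periodic_of_isLittleO (hh : 0 < h) (hF : Differentiable ℂ F)
    (hper : Function.Periodic F h)
    (hgrowth : F =o[comap im atTop] fun z => Real.exp (2 * π * z.im / h)) :
    ∃ M, ∀ z : ℂ, 0 ≤ z.im → ‖F z‖ ≤ M := by
  obtain ⟨M, hM⟩ := (isCompact_closedBall (0 : ℂ) 1).exists_bound_of_continuousOn
    (differentiable_cuspFunction_of_isLittleO hh hF hper hgrowth).continuous.continuousOn
  refine ⟨M, fun z hz => eq_cuspFunction hh.ne' hper z ▸ hM _ ?_⟩
  rw [mem_closedBall_zero_iff, norm_qParam, Real.exp_le_one_iff, neg_mul, neg_mul, neg_div]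
  exact neg_nonpos.2 (by positivity)

theorem apply_eq_apply_of_periodic_of_isLittleO (hh : 0 < h) (hF : Differentiable ℂ F)
    (hper : Function.Periodic F h)
    (hgrowth : F =o[comap (fun z => |z.im|) atTop] fun z => Real.exp (2 * π * |z.im| / h))
    (z w : ℂ) : F z = F w := by
  have habs : Tendsto (fun z : ℂ => |z.im|) (comap im atTop) atTop :=
    tendsto_abs_atTop_atTop.comp tendsto_comap
  have hexp : (fun z : ℂ => Real.exp (2 * π * |z.im| / h)) =ᶠ[comap im atTop]
      fun z => Real.exp (2 * π * z.im / h) := by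
    filter_upwards [tendsto_comap.eventually (eventually_ge_atTop 0)] with z hz
    rw [abs_of_nonneg hz]
  have hneg : Tendsto (fun z : ℂ => -z) (comap im atTop) (comap (fun z => |z.im|) atTop) :=
    tendsto_comap_iff.2 (habs.congr fun z => by simp)
  obtain ⟨M₁, hM₁⟩ := exists_norm_le_of_periodic_of_isLittleO hh hF hper <|
    (hgrowth.mono habs.le_comap).congr' .rfl hexp
  obtain ⟨M₂, hM₂⟩ := exists_norm_le_of_periodic_of_isLittleO (F := fun z => F (-z)) hh
    (hF.comp differentiable_neg)
    (fun z => by simpa only [neg_add, ← sub_eq_add_neg] using hper.sub_eq (-z)) <|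
    (hgrowth.comp_tendsto hneg).congr' .rfl (by simpa [Function.comp_def] using hexp)
  refine hF.apply_eq_apply_of_bounded (isBounded_iff_forall_norm_le.2 ⟨max M₁ M₂, ?_⟩) z w
  rintro _ ⟨u, rfl⟩
  rcases le_total 0 u.im with hu | hu
  · exact (hM₁ u hu).trans (le_max_left _ _)
  · simpa using (hM₂ (-u) (by simpa using hu)).trans (le_max_right _ _)

theorem exists_periodic_extension_of_differentiableOn_re_pos {g : ℂ → ℂ}
    (hg : DifferentiableOn ℂ g {z | 0 < z.re}) (hper : ∀ z, 0 < z.re → g (z + 1) = g z) :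
    ∃ F : ℂ → ℂ, Differentiable ℂ F ∧ Function.Periodic F 1 ∧ ∀ z, 0 < z.re → F z = g z := by
  have hshift (n : ℕ) : ∀ z : ℂ, 0 < z.re → g (z + n) = g z := by
    induction n with
    | zero => simp
    | succ n ih =>
      intro z hz
      have hzn : 0 < (z + n).re := by
        simp only [add_re, natCast_re]
        positivity
      rw [Nat.cast_add_one, ← add_assoc, hper _ hzn, ih z hz]
  let F : ℂ → ℂ := fun z => g (z + (⌈|z.re|⌉₊ + 1 : ℕ))
  have hF {z : ℂ} {n : ℕ} (hn : 0 < (z + n).re) : F z = g (z + n) := by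
    have hz : 0 < (z + (⌈|z.re|⌉₊ + 1 : ℕ)).re := by
      simp only [add_re, natCast_re]
      push_cast
      linarith [neg_abs_le z.re, Nat.le_ceil |z.re|]
    rw [← hshift (⌈|z.re|⌉₊ + 1) _ hn, add_right_comm, hshift n _ hz]
  refine ⟨F, fun z₀ => ?_, fun z => ?_, fun z hz => ?_⟩
  · obtain ⟨n, hn⟩ := exists_nat_gt (-z₀.re)
    have hre : 0 < (z₀ + n).re := by simpa [neg_lt_iff_pos_add'] using hn
    have hopen : ∀ᶠ z : ℂ in 𝓝 z₀, 0 < (z + n).re :=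
      ((continuous_re.comp (continuous_add_const (n : ℂ))).tendsto z₀).eventually_const_lt hre
    have hgd := hg.differentiableAt ((isOpen_lt continuous_const continuous_re).mem_nhds hre)
    exact (hgd.comp z₀ (differentiableAt_id.add_const (n : ℂ))).congr_of_eventuallyEq
      (hopen.mono fun z hz => hF hz)
  · obtain ⟨n, hn⟩ := exists_nat_gt (-z.re)
    have hz : 0 < (z + n).re := by simpa [neg_lt_iff_pos_add'] using hn
    have hz' : 0 < (z + 1 + n).re := by simp at hz ⊢; linarith
    rw [hF hz, hF hz', add_right_comm, hper _ hz]
  · simpa using hF (n := 0) (by simpa using hz)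

end PeriodicLiouville

section RatioTest

open Filter Asymptotics
open scoped Topology

theorem norm_add_le_pow_mul_of_ratio {E : Type*} [SeminormedAddGroup E] {f : ℕ → E} {r : ℝ}
    (hr : 0 ≤ r) {N : ℕ} (hratio : ∀ k ≥ N, ‖f (k + 1)‖ ≤ r * ‖f k‖) (j : ℕ) :
    ‖f (j + N)‖ ≤ r ^ j * ‖f N‖ := by
  simpa using le_geom (u := fun j => ‖f (j + N)‖) hr j fun k _ => by
    simpa only [add_right_comm] using hratio (k + N) (Nat.le_add_left N k)

theorem isBigO_pow_of_ratio {E : Type*} [SeminormedAddGroup E] {f : ℕ → E} {r : ℝ} (hr : 0 < r)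
    (hratio : ∀ᶠ k in atTop, ‖f (k + 1)‖ ≤ r * ‖f k‖) :
    f =O[atTop] fun k => r ^ k := by
  obtain ⟨N, hN⟩ := eventually_atTop.1 hratio
  refine IsBigO.of_bound (‖f N‖ / r ^ N) ?_
  filter_upwards [eventually_ge_atTop N] with k hk
  obtain ⟨j, rfl⟩ := Nat.exists_eq_add_of_le' hk
  refine (norm_add_le_pow_mul_of_ratio hr.le hN j).trans_eq ?_
  rw [Real.norm_of_nonneg (by positivity), pow_add]
  field_simp

theorem tsum_norm_le_of_ratio {E : Type*} [SeminormedAddCommGroup E] {f : ℕ → E} {r : ℝ}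
    (hr₀ : 0 ≤ r) (hr₁ : r < 1) (hratio : ∀ k, ‖f (k + 1)‖ ≤ r * ‖f k‖) :
    ‖∑' k, f k‖ ≤ (1 - r)⁻¹ * ‖f 0‖ :=
  tsum_of_norm_bounded ((hasSum_geometric_of_lt_one hr₀ hr₁).mul_right ‖f 0‖) fun k => by
    simpa using norm_add_le_pow_mul_of_ratio hr₀ (N := 0) (fun k _ => hratio k) k

theorem differentiableOn_tsum_of_ratio {E : Type*} [NormedAddCommGroup E] [NormedSpace ℂ E]
    [CompleteSpace E] {f : ℕ → ℂ → E} {U : Set ℂ} (hU : IsOpen U) {r : ℝ} (hr₀ : 0 ≤ r)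
    (hr₁ : r < 1) (hf : ∀ k, DifferentiableOn ℂ (f k) U)
    (hratio : ∀ z ∈ U, ∀ᶠ p in 𝓝 z ×ˢ atTop, ‖f (p.2 + 1) p.1‖ ≤ r * ‖f p.2 p.1‖) :
    DifferentiableOn ℂ (fun z => ∑' k, f k z) U := by
  intro z hz
  obtain ⟨P, hP, Q, hQ, hPQ⟩ := eventually_prod_iff.1 (hratio z hz)
  obtain ⟨N, hN⟩ := eventually_atTop.1 hQ
  have hbdd : ∀ᶠ w in 𝓝 z, ‖f N w‖ < ‖f N z‖ + 1 :=
    ((hf N).differentiableAt (hU.mem_nhds hz)).continuousAt.norm.eventually_lt_const (lt_add_one _)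
  obtain ⟨V, hV, hVo, hzV⟩ := eventually_nhds_iff.1 ((hP.and hbdd).and (hU.mem_nhds hz))
  have hVU : V ⊆ U := fun w hw => (hV w hw).2
  have hbound : ∀ j, ∀ w ∈ V, ‖f (j + N) w‖ ≤ r ^ j * (‖f N z‖ + 1) := fun j w hw =>
    (norm_add_le_pow_mul_of_ratio (f := fun k => f k w) hr₀
      (fun k hk => hPQ (hV w hw).1.1 (hN k hk)) j).trans (by gcongr; exact (hV w hw).1.2.le)
  have hgeom : Summable fun j => r ^ j * (‖f N z‖ + 1) :=
    (summable_geometric_of_lt_one hr₀ hr₁).mul_right _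
  have htail : DifferentiableOn ℂ (fun w => ∑' j, f (j + N) w) V :=
    Complex.differentiableOn_tsum_of_summable_norm hgeom (fun j => (hf _).mono hVU) hVo hbound
  have hhead : DifferentiableOn ℂ (fun w => ∑ k ∈ Finset.range N, f k w) V :=
    DifferentiableOn.fun_sum fun k _ => (hf k).mono hVU
  have hsplit : ∀ w ∈ V, ∑' k, f k w = ∑ k ∈ Finset.range N, f k w + ∑' j, f (j + N) w := by
    intro w hw
    refine (Summable.sum_add_tsum_nat_add N ?_).symm
    exact (summable_nat_add_iff N).1 (hgeom.of_norm_bounded fun j => hbound j w hw)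
  exact ((hhead.add htail).congr hsplit).differentiableAt (hVo.mem_nhds hzV)
    |>.differentiableWithinAt

end RatioTest

section GammaRatio

open Complex
open scoped Real

theorem betaIntegral_ofReal_eq_integral_norm (a c : ℝ) :
    betaIntegral a c =
      (∫ t in (0 : ℝ)..1, ‖(t : ℂ) ^ ((a : ℂ) - 1) * (1 - (t : ℂ)) ^ ((c : ℂ) - 1)‖ : ℝ) := by
  rw [betaIntegral, ← intervalIntegral.integral_ofReal]
  refine intervalIntegral.integral_congr_Ioo_of_le zero_le_one fun t ht => ?_
  have hpow : ∀ s d : ℝ, 0 < s → (‖(s : ℂ) ^ ((d : ℂ) - 1)‖ : ℂ) = s ^ ((d : ℂ) - 1) := by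
    intro s d hs
    rw [norm_cpow_eq_rpow_re_of_pos hs, ofReal_cpow hs.le]
    simp
  have hone_sub := hpow (1 - t) c (sub_pos.2 ht.2)
  rw [ofReal_sub, ofReal_one] at hone_sub
  simp only [norm_mul, ofReal_mul, hpow t a ht.1, hone_sub]

theorem norm_betaIntegral_le {a c : ℝ} (ha : 0 < a) (hc : 0 < c) {u : ℂ} (hu : a ≤ u.re) :
    ‖betaIntegral u c‖ ≤ ‖betaIntegral a c‖ := by
  rw [betaIntegral_ofReal_eq_integral_norm a c, norm_real]
  refine le_trans ?_ (Real.le_norm_self _)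
  refine intervalIntegral.norm_integral_le_of_norm_le zero_le_one ?_
    (betaIntegral_convergent (by simpa using ha) (by simpa using hc)).norm
  refine MeasureTheory.ae_of_all _ fun t ht => ?_
  rw [norm_mul, norm_mul, norm_cpow_eq_rpow_re_of_pos ht.1, norm_cpow_eq_rpow_re_of_pos ht.1]
  gcongr ?_ * _
  exact Real.rpow_le_rpow_of_exponent_ge ht.1 ht.2 (by simpa using hu)

/-- The Pochhammer symbol `(a)_t = Γ(a + t) / Γ(a)` with complex index. -/
noncomputable def pochC (a t : ℂ) : ℂ := Gamma (a + t) / Gamma a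

theorem pochC_div_pochC_eq_betaIntegral_div {a b w : ℂ} (ha : 0 < a.re) (hab : a.re < b.re)
    (hw : 0 ≤ w.re) :
    pochC a w / pochC b w = betaIntegral (a + w) (b - a) / betaIntegral a (b - a) := by
  have hbeta : ∀ u : ℂ, 0 ≤ u.re →
      betaIntegral (a + u) (b - a) = Gamma (a + u) * Gamma (b - a) / Gamma (b + u) := by
    intro u hu
    have hne : Gamma (b + u) ≠ 0 := Gamma_ne_zero_of_re_pos (by rw [add_re]; linarith)
    rw [Gamma_mul_Gamma_eq_betaIntegral (by rw [add_re]; linarith) (by simpa using hab),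
      show a + u + (b - a) = b + u by ring, mul_div_cancel_left₀ _ hne]
  have hΓ : Gamma (b - a) ≠ 0 := Gamma_ne_zero_of_re_pos (by simpa using hab)
  have h0 := hbeta 0 le_rfl
  rw [add_zero, add_zero] at h0
  rw [hbeta w hw, h0, pochC, pochC]
  field_simp

theorem norm_pochC_div_pochC_le_one {a b : ℝ} (ha : 0 < a) (hab : a < b) {w : ℂ}
    (hw : 0 ≤ w.re) : ‖pochC a w / pochC b w‖ ≤ 1 := by
  rw [pochC_div_pochC_eq_betaIntegral_div (by simpa) (by simpa) hw, norm_div, ← ofReal_sub]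
  refine div_le_one_of_le₀ (norm_betaIntegral_le ha (sub_pos.2 hab) ?_) (norm_nonneg _)
  simpa using hw

theorem inv_Gamma_half_sub {w : ℂ} (hw : ∀ m : ℕ, w + 1 / 2 ≠ -m) :
    (Gamma (1 / 2 - w))⁻¹ = cos (π * w) * Gamma (w + 1 / 2) / π := by
  have hreflect := congrArg (·⁻¹) (Gamma_mul_Gamma_one_sub (w + 1 / 2))
  have hsin : sin (π * (w + 1 / 2)) = cos (π * w) := by
    rw [← sin_add_pi_div_two]; ring_nf
  rw [hsin, show 1 - (w + 1 / 2) = 1 / 2 - w by ring, mul_inv, inv_div] at hreflect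
  rw [mul_div_right_comm, ← hreflect, mul_right_comm, inv_mul_cancel₀ (Gamma_ne_zero hw), one_mul]

theorem norm_cos_le_exp_abs_im (z : ℂ) : ‖cos z‖ ≤ Real.exp |z.im| := by
  have hpos : ‖exp (z * I)‖ ≤ Real.exp |z.im| := by
    rw [norm_exp]; exact Real.exp_le_exp.2 (by simpa using neg_le_abs z.im)
  have hneg : ‖exp (-z * I)‖ ≤ Real.exp |z.im| := by
    rw [norm_exp]; exact Real.exp_le_exp.2 (by simpa using le_abs_self z.im)
  rw [cos, norm_div, RCLike.norm_ofNat, div_le_iff₀ two_pos]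
  linarith [norm_add_le (exp (z * I)) (exp (-z * I))]

end GammaRatio

section WZPair

open Complex
open scoped Real

/-- The ratio `(1/2)_z / (1)_z` whose cube occurs in the alternating series. -/
noncomputable def halfRatio (z : ℂ) : ℂ := pochC (1 / 2) z / pochC 1 z

/-- The Gamma-quotient common to both members of the Wilf–Zeilberger pair. The reciprocal Gamma
factors are written as inverses, so that they are entire in `z` (`Complex.Gamma` is `0` at its
poles). -/
noncomputable def wzKernel (z : ℂ) (k : ℕ) : ℂ :=
  (1 / 2) ^ k * Gamma (z + 1 / 2 + k) ^ 2 * (Gamma (z + 1 + k))⁻¹ * (Gamma (3 / 2 - z + k))⁻¹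

/-- The member of the Wilf–Zeilberger pair that is summed over `k`, normalized so that the
invariant `wzTotal` is `1 / π`. -/
noncomputable def wzF (z : ℂ) (k : ℕ) : ℂ :=
  2 * √2 / Gamma (1 / 2) * 8 ^ (-z) * (Gamma z)⁻¹ ^ 2 * wzKernel z k

/-- The member of the Wilf–Zeilberger pair that is summed over the unit translates of `z`, a
rational multiple of `wzF`. -/
noncomputable def wzG (z : ℂ) (k : ℕ) : ℂ :=
  -(1 / 8) * (2 * √2 / Gamma (1 / 2)) * 8 ^ (-z) * (Gamma (z + 1))⁻¹ ^ 2 * (6 * z + 2 * k + 1) *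
    (1 / 2 - z + k) * wzKernel z k

variable {z : ℂ} {k : ℕ}

theorem halfRatio_eq (z : ℂ) :
    halfRatio z = Gamma (z + 1 / 2) * (Gamma (z + 1))⁻¹ / Gamma (1 / 2) := by
  rw [halfRatio, pochC, pochC, Gamma_one, div_one, add_comm z, add_comm z]
  ring

theorem norm_halfRatio_le_one (hz : 0 ≤ z.re) : ‖halfRatio z‖ ≤ 1 := by
  simpa [halfRatio] using
    norm_pochC_div_pochC_le_one (a := 1 / 2) (b := 1) (by norm_num) (by norm_num) hz

theorem wzKernel_succ (h : z + 1 / 2 + k ≠ 0) :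
    wzKernel z (k + 1) * ((z + 1 + k) * (3 / 2 - z + k)) =
      1 / 2 * (z + 1 / 2 + k) ^ 2 * wzKernel z k := by
  unfold wzKernel
  rw [one_div_Gamma_eq_self_mul_one_div_Gamma_add_one (z + 1 + k),
    one_div_Gamma_eq_self_mul_one_div_Gamma_add_one (3 / 2 - z + k), Nat.cast_add_one,
    ← add_assoc, ← add_assoc, ← add_assoc, Gamma_add_one _ h]
  ring

theorem eight_cpow_neg_add_one (z : ℂ) : (8 : ℂ) ^ (-(z + 1)) = 8 ^ (-z) / 8 := by
  rw [neg_add, cpow_add _ _ (by norm_num), cpow_neg_one, div_eq_mul_inv]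

theorem wzF_add_one_sub (h : z + 1 / 2 + k ≠ 0) :
    wzF (z + 1) k - wzF z k = wzG z (k + 1) - wzG z k := by
  unfold wzF wzG wzKernel
  rw [eight_cpow_neg_add_one, one_div_Gamma_eq_self_mul_one_div_Gamma_add_one z, Nat.cast_add_one,
    show z + 1 + 1 / 2 + k = z + 1 / 2 + k + 1 by ring, ← add_assoc (z + 1 / 2),
    Gamma_add_one _ h, ← add_assoc (z + 1), add_right_comm (z + 1) 1,
    one_div_Gamma_eq_self_mul_one_div_Gamma_add_one (z + 1 + k),
    one_div_Gamma_eq_self_mul_one_div_Gamma_add_one (3 / 2 - (z + 1) + k),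
    show 3 / 2 - (z + 1) + (k : ℂ) + 1 = 3 / 2 - z + k by ring,
    one_div_Gamma_eq_self_mul_one_div_Gamma_add_one (3 / 2 - z + k), ← add_assoc (3 / 2 - z)]
  ring

theorem half_sub_mul_wzKernel_zero (z : ℂ) :
    (1 / 2 - z) * wzKernel z 0 =
      Gamma (z + 1 / 2) ^ 2 * (Gamma (z + 1))⁻¹ * (Gamma (1 / 2 - z))⁻¹ := by
  rw [one_div_Gamma_eq_self_mul_one_div_Gamma_add_one (1 / 2 - z), wzKernel,
    show 1 / 2 - z + 1 = 3 / 2 - z by ring, Nat.cast_zero, add_zero, add_zero, add_zero]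
  ring

theorem wzG_add_one_zero (h : z + 1 / 2 ≠ 0) :
    wzG (z + 1) 0 * (8 * (z + 1) ^ 3 * (6 * z + 1)) =
      -((z + 1 / 2) ^ 3 * (6 * z + 7)) * wzG z 0 := by
  have hG : ∀ w : ℂ, wzG w 0 = -(1 / 8) * (2 * √2 / Gamma (1 / 2)) * 8 ^ (-w) * (6 * w + 1) *
      (Gamma (w + 1))⁻¹ ^ 3 * Gamma (w + 1 / 2) ^ 2 * (Gamma (1 / 2 - w))⁻¹ := by
    intro w
    rw [wzG, Nat.cast_zero, mul_zero, add_zero, add_zero, mul_assoc _ (1 / 2 - w),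
      half_sub_mul_wzKernel_zero]
    ring
  rw [hG, hG, eight_cpow_neg_add_one, add_right_comm z 1 (1 / 2), Gamma_add_one _ h,
    one_div_Gamma_eq_self_mul_one_div_Gamma_add_one (z + 1),
    one_div_Gamma_eq_self_mul_one_div_Gamma_add_one (1 / 2 - (z + 1)),
    show 1 / 2 - (z + 1) + 1 = 1 / 2 - z by ring]
  ring

theorem Gamma_half_sq : Gamma (1 / 2) ^ 2 = π := by
  rw [Gamma_one_half_eq, one_div]
  exact cpow_ofNat_inv_pow _ _

theorem half_sub_mul_wzKernel_zero_eq_cos (hz : ∀ m : ℕ, z + 1 / 2 ≠ -m) :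
    (1 / 2 - z) * wzKernel z 0 * (Gamma (z + 1))⁻¹ ^ 2 =
      Gamma (1 / 2) * cos (π * z) * halfRatio z ^ 3 := by
  have hΓ : Gamma (1 / 2) ≠ 0 := Gamma_ne_zero_of_re_pos (by norm_num)
  rw [half_sub_mul_wzKernel_zero, inv_Gamma_half_sub hz, halfRatio_eq, ← Gamma_half_sq]
  field_simp

theorem wzG_zero (hz : ∀ m : ℕ, z + 1 / 2 ≠ -m) :
    wzG z 0 = -(√2 / 4) * cos (π * z) * (8 ^ (-z) * halfRatio z ^ 3 * (6 * z + 1)) := by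
  have hΓ : Gamma (1 / 2) ≠ 0 := Gamma_ne_zero_of_re_pos (by norm_num)
  calc wzG z 0 = -(1 / 8) * (2 * √2 / Gamma (1 / 2)) * 8 ^ (-z) * (6 * z + 1) *
        ((1 / 2 - z) * wzKernel z 0 * (Gamma (z + 1))⁻¹ ^ 2) := by
        rw [wzG, Nat.cast_zero, mul_zero, add_zero, add_zero]; ring
    _ = _ := by rw [half_sub_mul_wzKernel_zero_eq_cos hz]; field_simp; ring

theorem wzF_zero (hz : ∀ m : ℕ, z + 1 / 2 ≠ -m) (hz' : 2 * z - 1 ≠ 0) :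
    wzF z 0 = -(4 * √2) * cos (π * z) * (8 ^ (-z) * (z ^ 2 / (2 * z - 1)) * halfRatio z ^ 3) := by
  have hΓ : Gamma (1 / 2) ≠ 0 := Gamma_ne_zero_of_re_pos (by norm_num)
  calc wzF z 0 = -(2 * (2 * √2 / Gamma (1 / 2))) * 8 ^ (-z) * (z ^ 2 / (2 * z - 1)) *
        ((1 / 2 - z) * wzKernel z 0 * (Gamma (z + 1))⁻¹ ^ 2) := by
        rw [wzF, one_div_Gamma_eq_self_mul_one_div_Gamma_add_one z]; field_simp; ring
    _ = _ := by rw [half_sub_mul_wzKernel_zero_eq_cos hz]; field_simp; ring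

end WZPair

section WZSums

open Asymptotics Complex Filter
open scoped ComplexConjugate Topology

theorem norm_wzKernel_succ_le {z : ℂ} {k : ℕ} (hB : 4 ≤ ‖z + 1 + k‖)
    (hC : 4 * |2 * z.re - 1| ≤ ‖3 / 2 - z + k‖) :
    ‖wzKernel z (k + 1)‖ ≤ 3 / 4 * ‖wzKernel z k‖ := by
  have hA : z + 1 / 2 + k ≠ 0 := by
    intro h
    rw [show z + 1 + k = z + 1 / 2 + k + 1 / 2 by ring, h] at hB
    norm_num at hB
  have hAB : ‖z + 1 / 2 + k‖ ≤ 9 / 8 * ‖z + 1 + k‖ := by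
    have := norm_sub_le (z + 1 + k) (1 / 2)
    rw [show z + 1 + k - 1 / 2 = z + 1 / 2 + k by ring] at this
    norm_num at this
    linarith
  -- `z + 1/2 + k` and the conjugate of `3/2 - z + k` differ by the real number `2 re z - 1`.
  have hAC : ‖z + 1 / 2 + k‖ ≤ 5 / 4 * ‖3 / 2 - z + k‖ := by
    have hconj : z + 1 / 2 + k = conj (3 / 2 - z + k) + ((2 * z.re - 1 : ℝ) : ℂ) := by
      rw [map_add, map_sub, conj_natCast, show (3 / 2 : ℂ) = (3 / 2 : ℝ) by norm_num, conj_ofReal]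
      have hadd := add_conj z
      push_cast at hadd ⊢
      linear_combination hadd
    rw [hconj]
    refine (norm_add_le _ _).trans ?_
    rw [norm_conj, norm_real, Real.norm_eq_abs]
    linarith
  have hBC : 0 < ‖z + 1 + k‖ * ‖3 / 2 - z + k‖ :=
    mul_pos (by linarith) (by linarith [norm_pos_iff.2 hA])
  have hsucc := congrArg norm (wzKernel_succ hA)
  simp only [norm_mul, norm_pow, norm_div, norm_one, RCLike.norm_ofNat] at hsucc
  refine le_of_mul_le_mul_right ?_ hBC
  calc ‖wzKernel z (k + 1)‖ * (‖z + 1 + k‖ * ‖3 / 2 - z + k‖)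
      = 1 / 2 * (‖z + 1 / 2 + k‖ * ‖z + 1 / 2 + k‖) * ‖wzKernel z k‖ := by rw [hsucc]; ring
    _ ≤ 1 / 2 * (9 / 8 * ‖z + 1 + k‖ * (5 / 4 * ‖3 / 2 - z + k‖)) * ‖wzKernel z k‖ := by gcongr
    _ ≤ 3 / 4 * ‖wzKernel z k‖ * (‖z + 1 + k‖ * ‖3 / 2 - z + k‖) := by
      linarith [mul_nonneg hBC.le (norm_nonneg (wzKernel z k))]

theorem norm_wzG_add_one_zero_le {w : ℂ} (hw : 7 ≤ ‖w‖) :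
    ‖wzG (w + 1) 0‖ ≤ 1 / 4 * ‖wzG w 0‖ := by
  have hadd (c : ℂ) (u v : ℂ) (huv : u = v + c) : ‖u‖ ≤ ‖v‖ + ‖c‖ := huv ▸ norm_add_le v c
  have hone : 6 ≤ ‖w + 1‖ := by
    have := hadd (-1) w (w + 1) (by ring)
    norm_num at this
    linarith
  have hhalf : ‖w + 1 / 2‖ ≤ 13 / 12 * ‖w + 1‖ := by
    have := hadd (-(1 / 2)) (w + 1 / 2) (w + 1) (by ring)
    norm_num at this ⊢
    linarith
  have hsix : 41 ≤ ‖6 * w + 1‖ := by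
    have := hadd (-1) (6 * w) (6 * w + 1) (by ring)
    norm_num at this
    linarith
  have hseven : ‖6 * w + 7‖ ≤ 47 / 41 * ‖6 * w + 1‖ := by
    have := hadd 6 (6 * w + 7) (6 * w + 1) (by ring)
    norm_num at this
    linarith
  have hne : w + 1 / 2 ≠ 0 := by
    intro h
    have := hadd (1 / 2) (w + 1) (w + 1 / 2) (by ring)
    rw [h] at this
    norm_num at this
    linarith
  have hsucc := congrArg norm (wzG_add_one_zero hne)
  simp only [norm_mul, norm_neg, norm_pow, RCLike.norm_ofNat] at hsucc
  have hpos : 0 < 8 * ‖w + 1‖ ^ 3 * ‖6 * w + 1‖ := by positivity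
  refine le_of_mul_le_mul_right ?_ hpos
  calc ‖wzG (w + 1) 0‖ * (8 * ‖w + 1‖ ^ 3 * ‖6 * w + 1‖)
      = ‖w + 1 / 2‖ ^ 3 * ‖6 * w + 7‖ * ‖wzG w 0‖ := hsucc
    _ ≤ (13 / 12 * ‖w + 1‖) ^ 3 * (47 / 41 * ‖6 * w + 1‖) * ‖wzG w 0‖ := by gcongr
    _ ≤ 1 / 4 * ‖wzG w 0‖ * (8 * ‖w + 1‖ ^ 3 * ‖6 * w + 1‖) := by
      linarith [mul_nonneg hpos.le (norm_nonneg (wzG w 0))]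

theorem tendsto_norm_add_natCast_atTop {X : Type*} {l : Filter X} {u : X → ℂ} {c : ℂ}
    (hu : Tendsto u l (𝓝 c)) :
    Tendsto (fun p : X × ℕ => ‖u p.1 + p.2‖) (l ×ˢ atTop) atTop := by
  have hnat : Tendsto (fun p : X × ℕ => (p.2 : ℝ)) (l ×ˢ atTop) atTop :=
    tendsto_natCast_atTop_atTop.comp tendsto_snd
  refine tendsto_atTop_mono (fun p => ?_) (hnat.atTop_add (hu.norm.comp tendsto_fst).neg)
  rw [Function.comp_apply, ← sub_eq_add_neg, ← norm_natCast, add_comm (u p.1)]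
  exact norm_sub_le_norm_add _ _

theorem eventually_norm_wzKernel_succ_le (z : ℂ) :
    ∀ᶠ p in 𝓝 z ×ˢ atTop, ‖wzKernel p.1 (p.2 + 1)‖ ≤ 3 / 4 * ‖wzKernel p.1 p.2‖ := by
  have hB := tendsto_norm_add_natCast_atTop ((continuous_add_const (1 : ℂ)).tendsto z)
  have hC := tendsto_norm_add_natCast_atTop ((continuous_sub_left (3 / 2 : ℂ)).tendsto z)
  have hre : Tendsto (fun p : ℂ × ℕ => 4 * |2 * p.1.re - 1|) (𝓝 z ×ˢ atTop)
      (𝓝 (4 * |2 * z.re - 1|)) :=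
    ((by fun_prop : Continuous fun w : ℂ => 4 * |2 * w.re - 1|).tendsto z).comp tendsto_fst
  filter_upwards [hB.eventually_ge_atTop 4, hC.eventually_ge_atTop (4 * |2 * z.re - 1| + 1),
    hre.eventually_le_const (lt_add_one _)] with p hpB hpC hpre
  exact norm_wzKernel_succ_le hpB (hpre.trans hpC)

theorem eventually_norm_wzG_add_natCast_zero_le (z : ℂ) :
    ∀ᶠ p in 𝓝 z ×ˢ atTop, ‖wzG (p.1 + (p.2 + 1 : ℕ)) 0‖ ≤ 1 / 4 * ‖wzG (p.1 + (p.2 : ℕ)) 0‖ := by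
  have hnorm := tendsto_norm_add_natCast_atTop (continuous_id.tendsto z)
  filter_upwards [hnorm.eventually_ge_atTop 7] with p (hp : 7 ≤ ‖p.1 + (p.2 : ℂ)‖)
  simpa only [Nat.cast_add_one, ← add_assoc] using norm_wzG_add_one_zero_le hp

theorem eventually_atTop_of_eventually_nhds_prod {X : Type*} [TopologicalSpace X] {x : X}
    {p : X × ℕ → Prop} (h : ∀ᶠ q in 𝓝 x ×ˢ atTop, p q) : ∀ᶠ k in atTop, p (x, k) :=
  (tendsto_const_nhds.prodMk tendsto_id).eventually h

theorem isBigO_wzKernel (z : ℂ) : wzKernel z =O[atTop] fun k => (3 / 4 : ℝ) ^ k :=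
  isBigO_pow_of_ratio (by norm_num) <|
    eventually_atTop_of_eventually_nhds_prod (eventually_norm_wzKernel_succ_le z)

theorem summable_wzKernel (z : ℂ) : Summable (wzKernel z) :=
  summable_of_isBigO_nat (summable_geometric_of_lt_one (by norm_num) (by norm_num))
    (isBigO_wzKernel z)

theorem summable_wzF (z : ℂ) : Summable (wzF z) := (summable_wzKernel z).mul_left _

theorem summable_wzG_add_natCast_zero (z : ℂ) : Summable fun n : ℕ => wzG (z + n) 0 :=
  summable_of_ratio_norm_eventually_le (r := 1 / 4) (by norm_num) <|
    eventually_atTop_of_eventually_nhds_prod (eventually_norm_wzG_add_natCast_zero_le z)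

theorem tendsto_wzG_atTop (z : ℂ) : Tendsto (wzG z) atTop (𝓝 0) := by
  have hmul (j : ℕ) : Tendsto (fun k : ℕ => (k : ℂ) ^ j * wzKernel z k) atTop (𝓝 0) := by
    refine ((isBigO_refl (fun k : ℕ => (k : ℂ) ^ j) atTop).norm_right.mul
      (isBigO_wzKernel z)).trans_tendsto ?_
    simpa using tendsto_pow_const_mul_const_pow_of_abs_lt_one j
      (show |(3 / 4 : ℝ)| < 1 by norm_num [abs_of_pos])
  let c := -(1 / 8) * (2 * √2 / Gamma (1 / 2)) * 8 ^ (-z) * (Gamma (z + 1))⁻¹ ^ 2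
  have hlim := (((hmul 2).const_mul (2 * c)).add
    ((hmul 1).const_mul (c * (2 * (1 / 2 - z) + (6 * z + 1))))).add
    ((hmul 0).const_mul (c * ((1 / 2 - z) * (6 * z + 1))))
  simp only [mul_zero, add_zero] at hlim
  refine hlim.congr fun k => ?_
  simp only [wzG, c]
  ring

theorem ne_neg_natCast_of_re_pos {w : ℂ} (hw : 0 < w.re) (m : ℕ) : w ≠ -m := by
  rintro rfl
  simp [← not_le] at hw

theorem differentiableOn_wzKernel (k : ℕ) :
    DifferentiableOn ℂ (fun z => wzKernel z k) {z | 0 < z.re} := by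
  intro z (hz : 0 < z.re)
  have hre : 0 < (z + 1 / 2 + k).re := by
    norm_num
    positivity
  have hΓ : DifferentiableAt ℂ (fun z => Gamma (z + 1 / 2 + k)) z :=
    (differentiableAt_Gamma _ (ne_neg_natCast_of_re_pos hre)).comp z (by fun_prop)
  have hinv {u : ℂ → ℂ} (hu : Differentiable ℂ u) : Differentiable ℂ (fun z => (Gamma (u z))⁻¹) :=
    differentiable_one_div_Gamma.comp hu
  unfold wzKernel
  exact ((((hΓ.pow 2).const_mul _).mul (hinv (by fun_prop) z)).mul
    (hinv (by fun_prop) z)).differentiableWithinAt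

theorem differentiable_eight_cpow_neg : Differentiable ℂ fun z : ℂ => (8 : ℂ) ^ (-z) :=
  fun z => differentiableAt_id.neg.const_cpow (Or.inl (by norm_num))

theorem differentiableOn_wzF (k : ℕ) : DifferentiableOn ℂ (fun z => wzF z k) {z | 0 < z.re} := by
  have hinv := differentiable_one_div_Gamma.pow 2
  have hpow := differentiable_eight_cpow_neg
  exact ((hpow.const_mul _).mul hinv).differentiableOn.mul (differentiableOn_wzKernel k)

theorem differentiableOn_wzG (k : ℕ) : DifferentiableOn ℂ (fun z => wzG z k) {z | 0 < z.re} := by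
  have hinv : Differentiable ℂ fun z : ℂ => (Gamma (z + 1))⁻¹ ^ 2 :=
    (differentiable_one_div_Gamma.comp (differentiable_id.add_const 1)).pow 2
  have hpow := differentiable_eight_cpow_neg
  exact ((((hpow.const_mul _).mul hinv).mul (by fun_prop)).mul
    (by fun_prop)).differentiableOn.mul (differentiableOn_wzKernel k)

end WZSums

section WZInvariant

open Asymptotics Complex Filter Set
open scoped Real Topology

/-- The function of `z` that the Wilf–Zeilberger relation makes invariant under `z ↦ z + 1`: the
row sum of `wzF` minus the sum of `wzG · 0` over the unit translates of `z`. -/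
noncomputable def wzTotal (z : ℂ) : ℂ := ∑' k, wzF z k - ∑' n : ℕ, wzG (z + n) 0

variable {z : ℂ}

theorem tsum_wzF_add_one_sub (hz : ∀ m : ℕ, z + 1 / 2 ≠ -m) :
    ∑' k, wzF (z + 1) k - ∑' k, wzF z k = -wzG z 0 := by
  have hdiff := (summable_wzF (z + 1)).sub (summable_wzF z)
  rw [← (summable_wzF (z + 1)).tsum_sub (summable_wzF z)]
  refine tendsto_nhds_unique hdiff.hasSum.tendsto_sum_nat ?_
  have hrel (k : ℕ) : wzF (z + 1) k - wzF z k = wzG z (k + 1) - wzG z k :=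
    wzF_add_one_sub fun h => hz k (eq_neg_of_add_eq_zero_left h)
  simp only [hrel, Finset.sum_range_sub]
  simpa only [zero_sub] using (tendsto_wzG_atTop z).sub_const (wzG z 0)

theorem wzTotal_add_one (hz : ∀ m : ℕ, z + 1 / 2 ≠ -m) : wzTotal (z + 1) = wzTotal z := by
  have hshift (n : ℕ) : z + (n + 1 : ℕ) = z + 1 + n := by rw [Nat.cast_add_one]; ring
  have hG := (summable_wzG_add_natCast_zero z).tsum_eq_zero_add
  simp only [Nat.cast_zero, add_zero, hshift] at hG
  have hF := tsum_wzF_add_one_sub hz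
  unfold wzTotal
  linear_combination hF + hG

theorem add_half_ne_neg_natCast (hz : -1 / 2 < z.re) (m : ℕ) : z + 1 / 2 ≠ -m :=
  ne_neg_natCast_of_re_pos (by norm_num; linarith) m

theorem wzTotal_add_natCast (hz : ∀ m : ℕ, z + 1 / 2 ≠ -m) (n : ℕ) :
    wzTotal (z + n) = wzTotal z := by
  induction n with
  | zero => rw [Nat.cast_zero, add_zero]
  | succ n ih =>
    rw [Nat.cast_add_one, ← add_assoc, wzTotal_add_one fun m h => hz (m + n) ?_, ih]
    push_cast
    linear_combination h

theorem norm_wzF_succ_le {r : ℝ} {k : ℕ} (h : ‖wzKernel z (k + 1)‖ ≤ r * ‖wzKernel z k‖) :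
    ‖wzF z (k + 1)‖ ≤ r * ‖wzF z k‖ := by
  rw [wzF, wzF, norm_mul, norm_mul _ (wzKernel z k), mul_left_comm]
  gcongr

theorem differentiableOn_wzTotal : DifferentiableOn ℂ wzTotal {z | 0 < z.re} := by
  have hU : IsOpen {z : ℂ | 0 < z.re} := isOpen_lt continuous_const continuous_re
  refine DifferentiableOn.sub
    (differentiableOn_tsum_of_ratio hU (r := 3 / 4) (by norm_num) (by norm_num)
      differentiableOn_wzF fun z _ => ?_)
    (differentiableOn_tsum_of_ratio hU (r := 1 / 4) (by norm_num) (by norm_num)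
      (fun n => (differentiableOn_wzG 0).comp (by fun_prop) fun z (hz : 0 < z.re) => ?_)
      fun z _ => eventually_norm_wzG_add_natCast_zero_le z)
  · filter_upwards [eventually_norm_wzKernel_succ_le z] with p hp
    exact norm_wzF_succ_le hp
  · simpa using add_pos_of_pos_of_nonneg hz n.cast_nonneg

theorem norm_wzTotal_le_of_seven_le_abs_im (hz₀ : 0 ≤ z.re) (hz₁ : z.re ≤ 1) (him : 7 ≤ |z.im|) :
    ‖wzTotal z‖ ≤ 4 * ‖wzF z 0‖ + 4 / 3 * ‖wzG z 0‖ := by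
  have hF := tsum_norm_le_of_ratio (f := wzF z) (r := 3 / 4) (by norm_num) (by norm_num)
    fun k => norm_wzF_succ_le <| norm_wzKernel_succ_le
      (by linarith [show |z.im| ≤ _ by simpa using abs_im_le_norm (z + 1 + k)])
      (by
        have : |2 * z.re - 1| ≤ 1 := abs_le.2 ⟨by linarith, by linarith⟩
        linarith [show |z.im| ≤ _ by simpa using abs_im_le_norm (3 / 2 - z + k)])
  have hG := tsum_norm_le_of_ratio (f := fun n : ℕ => wzG (z + n) 0) (r := 1 / 4)
    (by norm_num) (by norm_num) fun n => by
      have hn : 7 ≤ ‖z + n‖ := him.trans (by simpa using abs_im_le_norm (z + n))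
      simpa only [Nat.cast_add_one, ← add_assoc] using norm_wzG_add_one_zero_le hn
  rw [Nat.cast_zero, add_zero] at hG
  refine (norm_sub_le _ _).trans ((add_le_add hF hG).trans_eq ?_)
  norm_num

theorem norm_eight_cpow_neg_le_one (hz : 0 ≤ z.re) : ‖(8 : ℂ) ^ (-z)‖ ≤ 1 := by
  rw [← ofReal_ofNat, norm_cpow_eq_rpow_re_of_pos (by norm_num)]
  exact Real.rpow_le_one_of_one_le_of_nonpos (by norm_num) (by simpa using hz)

theorem norm_cos_pi_mul_le (z : ℂ) : ‖cos (π * z)‖ ≤ Real.exp (π * |z.im|) := by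
  simpa [abs_mul, abs_of_pos Real.pi_pos] using norm_cos_le_exp_abs_im (π * z)

theorem norm_wzF_zero_le (hz₀ : 0 < z.re) (him : 1 ≤ |z.im|) :
    ‖wzF z 0‖ ≤ 8 * ‖z‖ ^ 2 * Real.exp (π * |z.im|) := by
  have hden : 1 ≤ ‖2 * z - 1‖ := by
    have := abs_im_le_norm (2 * z - 1)
    simp only [sub_im, mul_im, re_ofNat, im_ofNat, zero_mul, one_im, sub_zero, add_zero, abs_mul,
      Nat.abs_ofNat] at this
    linarith
  have hsqrt : 4 * √2 ≤ 8 := by linarith [Real.sqrt_two_lt_three_halves]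
  have hratio := norm_halfRatio_le_one hz₀.le
  have hpow := norm_eight_cpow_neg_le_one hz₀.le
  have hcos := norm_cos_pi_mul_le z
  rw [wzF_zero (add_half_ne_neg_natCast (by linarith)) (norm_pos_iff.1 (by linarith))]
  simp only [norm_mul, norm_neg, norm_pow, norm_div, RCLike.norm_ofNat, norm_real,
    Real.norm_of_nonneg (Real.sqrt_nonneg 2)]
  calc 4 * √2 * ‖cos (π * z)‖ * (‖(8 : ℂ) ^ (-z)‖ * (‖z‖ ^ 2 / ‖2 * z - 1‖) * ‖halfRatio z‖ ^ 3)
      ≤ 8 * Real.exp (π * |z.im|) * (1 * (‖z‖ ^ 2 / 1) * 1 ^ 3) := by gcongr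
    _ = 8 * ‖z‖ ^ 2 * Real.exp (π * |z.im|) := by ring

theorem norm_wzG_zero_le (hz₀ : 0 < z.re) :
    ‖wzG z 0‖ ≤ (6 * ‖z‖ + 1) * Real.exp (π * |z.im|) := by
  have hsqrt : √2 / 4 ≤ 1 := by linarith [Real.sqrt_two_lt_three_halves]
  have hsix : ‖6 * z + 1‖ ≤ 6 * ‖z‖ + 1 := by simpa using norm_add_le (6 * z) 1
  have hratio := norm_halfRatio_le_one hz₀.le
  have hpow := norm_eight_cpow_neg_le_one hz₀.le
  have hcos := norm_cos_pi_mul_le z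
  rw [wzG_zero (add_half_ne_neg_natCast (by linarith))]
  simp only [norm_mul, norm_neg, norm_pow, norm_div, RCLike.norm_ofNat, norm_real,
    Real.norm_of_nonneg (Real.sqrt_nonneg 2)]
  calc √2 / 4 * ‖cos (π * z)‖ * (‖(8 : ℂ) ^ (-z)‖ * ‖halfRatio z‖ ^ 3 * ‖6 * z + 1‖)
      ≤ 1 * Real.exp (π * |z.im|) * (1 * 1 ^ 3 * (6 * ‖z‖ + 1)) := by gcongr
    _ = (6 * ‖z‖ + 1) * Real.exp (π * |z.im|) := by ring

theorem norm_wzTotal_le_sq_mul_exp (hz₀ : 0 < z.re) (hz₁ : z.re ≤ 1) (him : 7 ≤ |z.im|) :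
    ‖wzTotal z‖ ≤ 44 * ((1 + |z.im|) ^ 2 * Real.exp (π * |z.im|)) := by
  have hnorm : ‖z‖ ≤ 1 + |z.im| := by
    have := norm_le_abs_re_add_abs_im z
    rw [abs_of_pos hz₀] at this
    linarith
  calc ‖wzTotal z‖
      ≤ 4 * (8 * ‖z‖ ^ 2 * Real.exp (π * |z.im|)) +
          4 / 3 * ((6 * ‖z‖ + 1) * Real.exp (π * |z.im|)) := by
        refine (norm_wzTotal_le_of_seven_le_abs_im hz₀.le hz₁ him).trans ?_
        gcongr
        exacts [norm_wzF_zero_le hz₀ (by linarith), norm_wzG_zero_le hz₀]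
    _ = (32 * ‖z‖ ^ 2 + 8 * ‖z‖ + 4 / 3) * Real.exp (π * |z.im|) := by ring
    _ ≤ 44 * (1 + |z.im|) ^ 2 * Real.exp (π * |z.im|) := by
        gcongr
        nlinarith [norm_nonneg z]
    _ = _ := mul_assoc _ _ _

theorem isLittleO_one_add_pow_mul_exp (n : ℕ) {a b : ℝ} (hab : a < b) :
    (fun y : ℝ => (1 + y) ^ n * Real.exp (a * y)) =o[atTop] fun y => Real.exp (b * y) := by
  have hpow : (fun y : ℝ => (1 + y) ^ n) =o[atTop] fun y => Real.exp ((b - a) * (1 + y)) :=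
    (isLittleO_pow_exp_pos_mul_atTop n (sub_pos.2 hab)).comp_tendsto
      (tendsto_atTop_add_const_left atTop (1 : ℝ) tendsto_id)
  refine (hpow.mul_isBigO (isBigO_refl _ _)).trans_isBigO
    (isBigO_of_le' (c := Real.exp (b - a)) _ fun y => ?_)
  rw [← Real.exp_add, Real.norm_of_nonneg (Real.exp_pos _).le,
    Real.norm_of_nonneg (Real.exp_pos _).le, ← Real.exp_add]
  exact (congrArg Real.exp (by ring)).le

theorem isLittleO_of_periodic_of_eq_wzTotal {F : ℂ → ℂ} (hper : Function.Periodic F 1)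
    (hF : ∀ z, 0 < z.re → F z = wzTotal z) :
    F =o[comap (fun z => |z.im|) atTop] fun z => Real.exp (2 * π * |z.im|) := by
  refine IsBigO.trans_isLittleO (IsBigO.of_bound 44 ?_)
    ((isLittleO_one_add_pow_mul_exp 2 (by linarith [Real.pi_pos])).comp_tendsto tendsto_comap)
  filter_upwards [tendsto_comap.eventually_ge_atTop (7 : ℝ)] with z him
  let w : ℂ := z - (⌈z.re⌉ - 1 : ℤ)
  have hre : w.re = z.re - (⌈z.re⌉ - 1) := by simp [w]
  have hre₀ : 0 < w.re := by linarith [Int.ceil_lt_add_one z.re]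
  have hre₁ : w.re ≤ 1 := by linarith [Int.le_ceil z.re]
  have him_eq : w.im = z.im := by simp [w]
  have hw : F w = F z := by simpa [w] using hper.sub_int_mul_eq (⌈z.re⌉ - 1) (x := z)
  rw [← hw, hF w hre₀, Function.comp_apply, Real.norm_of_nonneg (by positivity), ← him_eq]
  exact norm_wzTotal_le_sq_mul_exp hre₀ hre₁ (him_eq ▸ him)

theorem wzTotal_eq_wzTotal_of_re_pos {w : ℂ} (hz : 0 < z.re) (hw : 0 < w.re) :
    wzTotal z = wzTotal w := by
  obtain ⟨F, hF, hper, hFeq⟩ := exists_periodic_extension_of_differentiableOn_re_pos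
    differentiableOn_wzTotal fun z hz => wzTotal_add_one (add_half_ne_neg_natCast (by linarith))
  rw [← hFeq z hz, ← hFeq w hw]
  exact apply_eq_apply_of_periodic_of_isLittleO one_pos hF (by simpa using hper)
    (by simpa using isLittleO_of_periodic_of_eq_wzTotal hper hFeq) z w

end WZInvariant

section WZValue

open Complex Filter MeasureTheory
open scoped Real

theorem integral_sin_div_one_sub_half_sin_sq :
    ∫ t in 0..π, Real.sin t / (1 - 1 / 2 * Real.sin t ^ 2) = π := by
  have hden (t : ℝ) : 1 - 1 / 2 * Real.sin t ^ 2 ≠ 0 := by linarith [Real.sin_sq_le_one t]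
  have hderiv (t : ℝ) : HasDerivAt (fun t => -2 * Real.arctan (Real.cos t))
      (Real.sin t / (1 - 1 / 2 * Real.sin t ^ 2)) t := by
    refine ((Real.hasDerivAt_cos t).arctan.const_mul (-2)).congr_deriv ?_
    have hcos : 1 + Real.cos t ^ 2 = 2 * (1 - 1 / 2 * Real.sin t ^ 2) := by
      rw [Real.cos_sq']; ring
    have := hden t
    rw [hcos]
    field_simp
  rw [intervalIntegral.integral_eq_sub_of_hasDerivAt (fun t _ => hderiv t)
    (Continuous.intervalIntegrable (by fun_prop (disch := exact hden _)) _ _), Real.cos_pi,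
    Real.cos_zero, Real.arctan_neg, Real.arctan_one]
  ring

theorem hasSum_pow_mul_integral_sin_pow_odd {r : ℝ} (hr₀ : 0 ≤ r) (hr₁ : r < 1) :
    HasSum (fun k : ℕ => r ^ k * ∫ t in 0..π, Real.sin t ^ (2 * k + 1))
      (∫ t in 0..π, Real.sin t / (1 - r * Real.sin t ^ 2)) := by
  simp only [← intervalIntegral.integral_const_mul]
  refine intervalIntegral.hasSum_integral_of_dominated_convergence (fun k _ => r ^ k)
    (fun k => Continuous.aestronglyMeasurable (by fun_prop))
    (fun k => ae_of_all _ fun t _ => ?_)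
    (ae_of_all _ fun t _ => summable_geometric_of_lt_one hr₀ hr₁)
    intervalIntegrable_const (ae_of_all _ fun t _ => ?_)
  · rw [norm_mul, norm_pow, norm_pow, Real.norm_of_nonneg hr₀]
    exact mul_le_of_le_one_right (by positivity)
      (pow_le_one₀ (norm_nonneg _) (Real.abs_sin_le_one t))
  · have hlt : r * Real.sin t ^ 2 < 1 :=
      (mul_le_of_le_one_right hr₀ (Real.sin_sq_le_one t)).trans_lt hr₁
    refine ((hasSum_geometric_of_lt_one (by positivity) hlt).mul_left (Real.sin t)).congr_fun
      fun k => ?_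
    ring

theorem wzKernel_half (k : ℕ) :
    wzKernel (1 / 2) k =
      ((1 / 2 : ℝ) ^ k * ∫ t in 0..π, Real.sin t ^ (2 * k + 1) : ℝ) / Gamma (1 / 2) := by
  rw [integral_sin_pow_odd]
  induction k with
  | zero =>
    have hΓ : Gamma (3 / 2) = 1 / 2 * Gamma (1 / 2) := by
      rw [← Gamma_add_one _ (by norm_num)]; norm_num
    norm_num [wzKernel, hΓ]
    ring
  | succ k ih =>
    have hk₁ : (k : ℂ) + 1 ≠ 0 := Nat.cast_add_one_ne_zero k
    have hk₃ : 2 * (k : ℂ) + 3 ≠ 0 := by exact_mod_cast (by omega : 2 * k + 3 ≠ 0)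
    have hsucc := wzKernel_succ (z := 1 / 2) (k := k) (by convert hk₁ using 1; ring)
    rw [ih] at hsucc
    refine mul_right_cancel₀ (mul_ne_zero (div_ne_zero hk₃ two_ne_zero) hk₁) ?_
    rw [show (2 * (k : ℂ) + 3) / 2 * (k + 1) = (1 / 2 + 1 + k) * (3 / 2 - 1 / 2 + k) by ring,
      hsucc, Finset.prod_range_succ]
    push_cast
    field_simp
    ring

theorem two_mul_sqrt_two_mul_eight_cpow_neg_half : 2 * √2 * (8 : ℂ) ^ (-(1 / 2) : ℂ) = 1 := by
  have hsqrt : (8 : ℂ) ^ (1 / 2 : ℂ) = 2 * √2 := by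
    rw [show (2 * √2 : ℂ) = (√(2 ^ 2 * 2) : ℝ) by simp, Real.sqrt_eq_rpow,
      ofReal_cpow (by norm_num)]
    norm_num
  rw [cpow_neg, hsqrt, mul_inv_cancel₀]
  simp

theorem wzTotal_half : wzTotal (1 / 2) = 1 / π := by
  have hG (n : ℕ) : wzG (1 / 2 + n) 0 = 0 := by
    have hcos : cos (π * (1 / 2 + n)) = 0 := cos_eq_zero_iff.2 ⟨n, by push_cast; ring⟩
    have hre : -1 / 2 < (1 / 2 + n : ℂ).re := by
      norm_num
      linarith [n.cast_nonneg (α := ℝ)]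
    rw [wzG_zero (add_half_ne_neg_natCast hre), hcos]
    ring
  have hF (k : ℕ) : wzF (1 / 2) k =
      1 / π ^ 2 * ((1 / 2 : ℝ) ^ k * ∫ t in 0..π, Real.sin t ^ (2 * k + 1) : ℝ) := by
    rw [wzF, wzKernel_half, ← Gamma_half_sq, div_mul_eq_mul_div,
      two_mul_sqrt_two_mul_eight_cpow_neg_half]
    ring
  have hsum := hasSum_pow_mul_integral_sin_pow_odd (r := 1 / 2) (by norm_num) (by norm_num)
  rw [integral_sin_div_one_sub_half_sin_sq] at hsum
  have hπ : (π : ℂ) ≠ 0 := ofReal_ne_zero.2 Real.pi_ne_zero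
  rw [wzTotal, tsum_congr hG, tsum_zero, sub_zero, tsum_congr hF,
    ((hasSum_ofReal.2 hsum).mul_left _).tsum_eq]
  field_simp

theorem wzTotal_eq {z : ℂ} (hz : ∀ m : ℕ, z + 1 / 2 ≠ -m) : wzTotal z = 1 / π := by
  obtain ⟨n, hn⟩ := exists_nat_gt (-z.re)
  rw [← wzTotal_add_natCast hz n, ← wzTotal_half]
  exact wzTotal_eq_wzTotal_of_re_pos (by simpa using neg_lt_iff_pos_add'.1 hn) (by norm_num)

end WZValue

section Identity

open Complex
open scoped Real

variable {z : ℂ}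

theorem ne_intCast_add_half_of_cos_pi_mul_ne_zero (hcos : cos (π * z) ≠ 0) (k : ℤ) :
    z ≠ k + 1 / 2 := by
  rintro rfl
  exact hcos (cos_eq_zero_iff.2 ⟨k, by ring⟩)

theorem wzKernel_eq_wzKernel_zero_mul (h₁ : ∀ m : ℕ, z + 1 / 2 ≠ -m) (h₂ : ∀ m : ℕ, z + 1 ≠ -m)
    (h₃ : ∀ m : ℕ, 3 / 2 - z ≠ -m) (k : ℕ) :
    wzKernel z k = wzKernel z 0 *
      (2 ^ (-k : ℂ) * (ascPochhammer ℂ k).eval (z + 1 / 2) ^ 2 /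
        ((ascPochhammer ℂ k).eval (z + 1) * (ascPochhammer ℂ k).eval (3 / 2 - z))) := by
  have hΓ {w : ℂ} (hw : ∀ m : ℕ, w ≠ -m) :
      Gamma (w + k) = Gamma w * (ascPochhammer ℂ k).eval w := by
    rw [← Gamma_add_nat_div_Gamma_eq w hw, mul_div_cancel₀ _ (Gamma_ne_zero hw)]
  have hpow : (2 : ℂ) ^ (-k : ℂ) = (1 / 2) ^ k := by
    rw [cpow_neg, cpow_natCast, one_div, inv_pow]
  simp only [wzKernel, hΓ h₁, hΓ h₂, hΓ h₃, hpow, Nat.cast_zero, add_zero, pow_zero]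
  ring

theorem wzF_eq_wzF_zero_mul {k : ℕ} {c : ℂ} (h : wzKernel z k = wzKernel z 0 * c) :
    wzF z k = wzF z 0 * c := by
  rw [wzF, wzF, h, ← mul_assoc]

theorem wzG_add_natCast_zero (hz : ∀ m : ℕ, z + 1 / 2 ≠ -m) (n : ℕ) :
    wzG (z + n) 0 = -(√2 / 4) * cos (π * z) *
      ((-1) ^ n * 2 ^ (-3 * (n + z)) * (pochC (1 / 2) (n + z) / pochC 1 (n + z)) ^ 3 *
        (6 * (n + z) + 1)) := by
  have hcos : cos (π * (z + n)) = (-1) ^ n * cos (π * z) := by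
    rw [mul_add, mul_comm (π : ℂ) n, cos_antiperiodic.add_nat_mul_eq]
  have hpow : (8 : ℂ) ^ (-(z + n)) = 2 ^ (-3 * (n + z)) := by
    rw [neg_mul, ← mul_neg, add_comm z]
    have h := natCast_cpow_natCast_mul 2 3 (-(n + z))
    norm_num at h ⊢
    exact h.symm
  rw [wzG_zero fun m h => hz (m + n) (by push_cast; linear_combination h), hcos, hpow,
    halfRatio, add_comm z]
  ring

theorem example_identity_general (hcos : cos (π * z) ≠ 0) (hz : ∀ m : ℕ, z + 1 ≠ -m) :
    Summable (fun n : ℕ => (-1) ^ n * (2 : ℂ) ^ (-3 * (n + z)) *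
      (pochC (1 / 2) (n + z) / pochC 1 (n + z)) ^ 3 * (6 * (n + z) + 1)) ∧
    Summable (fun n : ℕ => (2 : ℂ) ^ (-n : ℂ) * (ascPochhammer ℂ n).eval (z + 1 / 2) ^ 2 /
      ((ascPochhammer ℂ n).eval (z + 1) * (ascPochhammer ℂ n).eval (3 / 2 - z))) ∧
    √2 / 4 * ∑' n : ℕ, (-1) ^ n * (2 : ℂ) ^ (-3 * (n + z)) *
        (pochC (1 / 2) (n + z) / pochC 1 (n + z)) ^ 3 * (6 * (n + z) + 1) =
      1 / (π * cos (π * z)) +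
        4 * √2 * 8 ^ (-z) * (z ^ 2 / (2 * z - 1)) * (pochC (1 / 2) z / pochC 1 z) ^ 3 *
          ∑' n : ℕ, (2 : ℂ) ^ (-n : ℂ) * (ascPochhammer ℂ n).eval (z + 1 / 2) ^ 2 /
            ((ascPochhammer ℂ n).eval (z + 1) * (ascPochhammer ℂ n).eval (3 / 2 - z)) := by
  have hne (k : ℤ) : z - k - 1 / 2 ≠ 0 := fun h =>
    ne_intCast_add_half_of_cos_pi_mul_ne_zero hcos k (by linear_combination h)
  have h₁ (m : ℕ) : z + 1 / 2 ≠ -m := fun h => hne (-m - 1) (by push_cast; linear_combination h)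
  have h₂ : 2 * z - 1 ≠ 0 := fun h => hne 0 (by push_cast; linear_combination h / 2)
  have h₃ (m : ℕ) : 3 / 2 - z ≠ -m := fun h => hne (m + 1) (by push_cast; linear_combination -h)
  have hker : wzKernel z 0 ≠ 0 := by
    simpa [wzKernel, Gamma_ne_zero hz, Gamma_ne_zero h₃] using Gamma_ne_zero h₁
  have hF := wzKernel_eq_wzKernel_zero_mul h₁ hz h₃
  have hG := wzG_add_natCast_zero h₁
  refine ⟨(summable_mul_left_iff (by simp [hcos])).1 ((summable_wzG_add_natCast_zero z).congr hG),
    (summable_mul_left_iff hker).1 ((summable_wzKernel z).congr hF), ?_⟩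
  have htotal := wzTotal_eq h₁
  rw [wzTotal, tsum_congr fun k => wzF_eq_wzF_zero_mul (hF k), tsum_mul_left, wzF_zero h₁ h₂,
    tsum_congr hG, tsum_mul_left] at htotal
  have hcancel : cos (π * z) * (1 / (π * cos (π * z))) = 1 / π := by field_simp
  refine mul_left_cancel₀ hcos ?_
  rw [mul_add, hcancel, ← htotal, halfRatio]
  ring

theorem ofReal_pochG (a t : ℝ) : (pochG a t : ℂ) = pochC a t := by
  rw [pochG, pochC, ofReal_div, ← Gamma_ofReal, ← Gamma_ofReal, ofReal_add]

theorem ofReal_pochR (a : ℝ) (n : ℕ) : (pochR a n : ℂ) = (ascPochhammer ℂ n).eval (a : ℂ) := by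
  induction n with
  | zero => simp [pochR]
  | succ n ih =>
    rw [ascPochhammer_succ_eval, ← ih, pochR, Finset.prod_range_succ, ofReal_mul, ofReal_add,
      ofReal_natCast, pochR]

end Identity

/-- **Example of Section 2.** For `-1/2 < x < 1/2`,
`(√2/4) ∑_{n≥0} (-1)^n 2^{-3(n+x)} ((1/2)_{n+x}/(1)_{n+x})³ (6(n+x)+1)
 = 1/(π cos πx) + 4√2 · 8^{-x} · x²/(2x-1) · ((1/2)_x/(1)_x)³ ·
   ∑_{n≥0} 2^{-n} (x+1/2)_n² / ((x+1)_n (3/2-x)_n)`. -/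
theorem example_identity (x : ℝ) (hx1 : -1/2 < x) (hx2 : x < 1/2) :
    Summable (fun n : ℕ =>
      (-1 : ℝ) ^ n * (2 : ℝ) ^ (-(3 : ℝ) * ((n : ℝ) + x)) *
        (pochG (1/2) ((n : ℝ) + x) / pochG 1 ((n : ℝ) + x)) ^ 3 *
        (6 * ((n : ℝ) + x) + 1)) ∧
    Summable (fun n : ℕ =>
      (2 : ℝ) ^ (-(n : ℝ)) * pochR (x + 1/2) n ^ 2 /
        (pochR (x + 1) n * pochR (3/2 - x) n)) ∧
    (Real.sqrt 2 / 4) * (∑' n : ℕ,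
        (-1 : ℝ) ^ n * (2 : ℝ) ^ (-(3 : ℝ) * ((n : ℝ) + x)) *
          (pochG (1/2) ((n : ℝ) + x) / pochG 1 ((n : ℝ) + x)) ^ 3 *
          (6 * ((n : ℝ) + x) + 1))
      = 1 / (Real.pi * Real.cos (Real.pi * x)) +
        4 * Real.sqrt 2 * (8 : ℝ) ^ (-x) * (x ^ 2 / (2 * x - 1)) *
          (pochG (1/2) x / pochG 1 x) ^ 3 *
          ∑' n : ℕ,
            (2 : ℝ) ^ (-(n : ℝ)) * pochR (x + 1/2) n ^ 2 /
              (pochR (x + 1) n * pochR (3/2 - x) n) := by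
  have hcos : Real.cos (Real.pi * x) ≠ 0 :=
    (Real.cos_pos_of_mem_Ioo ⟨by nlinarith [Real.pi_pos], by nlinarith [Real.pi_pos]⟩).ne'
  have hx (m : ℕ) : x + 1 ≠ -m := by linarith [m.cast_nonneg (α := ℝ)]
  rw [← Complex.summable_ofReal, ← Complex.summable_ofReal, ← Complex.ofReal_inj]
  push_cast [ofReal_pochG, ofReal_pochR, Complex.ofReal_cpow (show (0 : ℝ) ≤ 2 by norm_num),
    Complex.ofReal_cpow (show (0 : ℝ) ≤ 8 by norm_num)]
  exact example_identity_general (z := x) (by exact_mod_cast hcos) (fun m => by exact_mod_cast hx m)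
end
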